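/- For every real number t there exist at least three distinct complex numbers ρ₁, ρ₂, ρ₃ such that each ρⱼ is a zero of the completed Riemann zeta function ξ, satisfies 0 < Re(ρⱼ) ≤ 1/2, and satisfies |t − Im(ρⱼ)| ≤ 22. -/

import Mathlib

open Complex

/-!
For `T ≥ 29.33` some zero `ρ` satisfies `|Im ρ - T| < 22 / 3`. Put `Ξ z = ξ (1 / 2 + z)`, where `ξ`
is the entire function `s (s - 1) π ^ (-s / 2) Γ (s / 2) ζ s`. Since `Ξ` is even, real and of order
one, `‖Ξ (a + i T)‖ ^ 4` is, up to a constant and a factor close to `1`, a finite product over zeros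
`w` of the product of the distances from `a + i T` to `± w`, `± conj w`. If all zeros keep distance
`22 / 3` from height `T`, an elementary inequality for each factor yields
`‖ξ (5 + i T)‖ ^ 5 ‖ξ (7 + i T)‖ ^ 4 ≤ ‖ξ (9 + i T)‖ ^ 4 ‖ξ (3 + i T)‖ ^ 5`. By the recurrence of
`Γ`, both `‖ξ (5 + i T)‖ / ‖ξ (3 + i T)‖` and `‖ξ (9 + i T)‖ / ‖ξ (7 + i T)‖` are `T / 2π` up to a
constant, so the left side exceeds the right by a factor proportional to `T`, a contradiction.

Below that height, `ξ` is real on the critical line and changes sign between the heights `0`, `17`,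
`22` and `27`: there the real part of `ζ` is positive by Euler–Maclaurin summation, and Stirling's
formula determines the sign of the real part of `π ^ (-s / 2) Γ (s / 2)`.

Three consecutive zeros chosen among these, moved to `Re ρ ≤ 1 / 2` by `ρ ↦ 1 - conj ρ` and to
negative heights by conjugation, lie within `22` of any given `t`.
-/

section ZeroFactorization

open Metric Filter

lemma norm_multiset_prod_sub (S : Multiset ℂ) (z : ℂ) :
    ‖(S.map (z - ·)).prod‖ = (S.map (‖z - ·‖)).prod := by
  simpa only [Multiset.map_map] using! map_multiset_prod (normHom : ℂ →*₀ ℝ) (S.map (z - ·))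

lemma pow_card_le_norm_multiset_prod_sub {S : Multiset ℂ} {z : ℂ} {d : ℝ} (hd : 0 ≤ d)
    (h : ∀ w ∈ S, d ≤ ‖z - w‖) : d ^ S.card ≤ ‖(S.map (z - ·)).prod‖ := by
  rw [norm_multiset_prod_sub, ← Multiset.prod_replicate, ← Multiset.map_const']
  exact Multiset.prod_map_le_prod_map₀ _ _ (fun _ _ ↦ hd) h

lemma norm_multiset_prod_sub_le_pow_card {S : Multiset ℂ} {z : ℂ} {d : ℝ}
    (h : ∀ w ∈ S, ‖z - w‖ ≤ d) : ‖(S.map (z - ·)).prod‖ ≤ d ^ S.card := by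
  rw [norm_multiset_prod_sub, ← Multiset.prod_replicate, ← Multiset.map_const']
  exact Multiset.prod_map_le_prod_map₀ _ _ (fun _ _ ↦ norm_nonneg _) h

lemma norm_multiset_prod_sub_mul_norm_neg (S : Multiset ℂ) (z : ℂ) :
    ‖(S.map (z - ·)).prod‖ * ‖(S.map (-z - ·)).prod‖ =
      (S.map fun w ↦ ‖z ^ 2 - w ^ 2‖).prod := by
  rw [norm_multiset_prod_sub, norm_multiset_prod_sub, ← Multiset.prod_map_mul]
  refine congrArg Multiset.prod (Multiset.map_congr rfl fun w _ ↦ ?_)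
  rw [← norm_mul, ← norm_neg]
  ring_nf

section Cofactor

variable {g h : ℂ → ℂ} {S : Multiset ℂ} {r M : ℝ}

lemma norm_cofactor_le {R : ℝ} (hh : Differentiable ℂ h)
    (hg : ∀ z, g z = (S.map (z - ·)).prod * h z) (hS : ∀ w ∈ S, ‖w‖ ≤ r) (hR : 0 < R)
    (hrR : r < R) (hM : ∀ z, ‖z‖ = R → ‖g z‖ ≤ M) {z : ℂ} (hz : ‖z‖ ≤ R) :
    ‖h z‖ ≤ M / (R - r) ^ S.card := by
  have hRr : 0 < R - r := sub_pos.2 hrR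
  refine norm_le_of_forall_mem_frontier_norm_le (isBounded_ball (x := (0 : ℂ)) (r := R))
    hh.diffContOnCl (fun x hx ↦ ?_) (by simpa [closure_ball _ hR.ne'] using hz)
  have hx : ‖x‖ = R := by simpa [frontier_ball _ hR.ne'] using hx
  have hprod : (R - r) ^ S.card ≤ ‖(S.map (x - ·)).prod‖ :=
    pow_card_le_norm_multiset_prod_sub hRr.le fun w hw ↦ by
      linarith [norm_sub_norm_le x w, hS w hw]
  rw [le_div_iff₀' (by positivity)]
  calc (R - r) ^ S.card * ‖h x‖ ≤ ‖(S.map (x - ·)).prod‖ * ‖h x‖ := by gcongr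
    _ = ‖g x‖ := by rw [hg, norm_mul]
    _ ≤ M := hM x hx

lemma norm_cofactor_mul_le (hh : Differentiable ℂ h)
    (hg : ∀ z, g z = (S.map (z - ·)).prod * h z) (hr : 0 < r) (hS : ∀ w ∈ S, ‖w‖ ≤ r)
    (hM : ∀ z, ‖z‖ ≤ 3 * r → ‖g z‖ ≤ M) {z : ℂ} (hz : ‖z‖ ≤ 3 * r) :
    ‖h z‖ * (‖g 0‖ * 2 ^ S.card) ≤ ‖h 0‖ * M := by
  have hM₀ : 0 ≤ M := (norm_nonneg _).trans (hM z hz)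
  have hhz : ‖h z‖ ≤ M / (2 * r) ^ S.card := by
    have := norm_cofactor_le hh hg hS (by positivity) (by linarith) (fun x hx ↦ hM x hx.le) hz
    rwa [show 3 * r - r = 2 * r by ring] at this
  have hg₀ : ‖g 0‖ ≤ r ^ S.card * ‖h 0‖ := by
    rw [hg, norm_mul]
    gcongr
    exact norm_multiset_prod_sub_le_pow_card fun w hw ↦ by simpa using hS w hw
  calc ‖h z‖ * (‖g 0‖ * 2 ^ S.card)
      ≤ M / (2 * r) ^ S.card * (r ^ S.card * ‖h 0‖ * 2 ^ S.card) := by gcongr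
    _ = ‖h 0‖ * M := by
      rw [mul_pow]
      field_simp

end Cofactor

lemma exists_card_le_of_eq_prod_mul {g : ℂ → ℂ} (hg : Differentiable ℂ g) (hg₀ : g 0 ≠ 0) {r : ℝ}
    (hr : 0 < r) :
    ∃ K : ℕ, ∀ (S : Multiset ℂ) (h : ℂ → ℂ), Differentiable ℂ h →
      (∀ z, g z = (S.map (z - ·)).prod * h z) → (∀ w ∈ S, ‖w‖ ≤ r) → S.card ≤ K := by
  obtain ⟨M, hM⟩ := (isCompact_closedBall (0 : ℂ) (3 * r)).exists_bound_of_continuousOn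
    hg.continuous.continuousOn
  obtain ⟨K, hK⟩ := pow_unbounded_of_one_lt (M / ‖g 0‖) one_lt_two
  refine ⟨K, fun S h hh hgh hS ↦ ?_⟩
  have hh₀ : h 0 ≠ 0 := fun h₀ ↦ hg₀ (by rw [hgh, h₀, mul_zero])
  have hpow : ‖g 0‖ * 2 ^ S.card ≤ M :=
    le_of_mul_le_mul_left (norm_cofactor_mul_le hh hgh hr hS
      (fun z hz ↦ hM z (by simpa using hz)) (by simpa using hr.le)) (norm_pos_iff.2 hh₀)
  refine (pow_le_pow_iff_right₀ (one_lt_two (α := ℝ))).1 (le_trans ?_ hK.le)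
  rwa [le_div_iff₀' (norm_pos_iff.2 hg₀)]

lemma exists_eq_prod_mul_forall_ne_zero {g : ℂ → ℂ} (hg : Differentiable ℂ g) (hg₀ : g 0 ≠ 0)
    {r : ℝ} (hr : 0 < r) :
    ∃ (S : Multiset ℂ) (h : ℂ → ℂ), Differentiable ℂ h ∧
      (∀ z, g z = (S.map (z - ·)).prod * h z) ∧ (∀ w ∈ S, ‖w‖ ≤ r) ∧
      ∀ z, ‖z‖ ≤ r → h z ≠ 0 := by
  classical
  let P : ℕ → Prop := fun n ↦ ∃ (S : Multiset ℂ) (h : ℂ → ℂ), S.card = n ∧ Differentiable ℂ h ∧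
    (∀ z, g z = (S.map (z - ·)).prod * h z) ∧ ∀ w ∈ S, ‖w‖ ≤ r
  obtain ⟨K, hK⟩ := exists_card_le_of_eq_prod_mul hg hg₀ hr
  have hPK : ∀ n, P n → n ≤ K := by
    rintro _ ⟨S, h, rfl, hh, hgh, hS⟩
    exact hK S h hh hgh hS
  have hP₀ : P 0 := ⟨0, g, by simp, hg, by simp, by simp⟩
  obtain ⟨S, h, hcard, hh, hgh, hS⟩ := Nat.findGreatest_spec (Nat.zero_le K) hP₀
  refine ⟨S, h, hh, hgh, hS, fun w hw hhw ↦ ?_⟩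
  have hP : P (Nat.findGreatest P K + 1) := by
    refine ⟨w ::ₘ S, dslope h w, by rw [Multiset.card_cons, hcard], ?_, fun z ↦ ?_, ?_⟩
    · rw [← differentiableOn_univ]
      exact (differentiableOn_dslope univ_mem).2 hh.differentiableOn
    · have hslope : (z - w) * dslope h w z = h z := by simpa [hhw] using sub_smul_dslope h w z
      rw [hgh, ← hslope, Multiset.map_cons, Multiset.prod_cons]
      ring
    · simpa [hw] using hS
  exact absurd (Nat.le_findGreatest (hPK _ hP) hP) (by lia)

lemma exists_eqOn_ball_mul_exp {h : ℂ → ℂ} {r : ℝ} (hh : DifferentiableOn ℂ h (ball 0 r))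
    (hr : 0 < r) (hne : ∀ z ∈ ball (0 : ℂ) r, h z ≠ 0) :
    ∃ q : ℂ → ℂ, DifferentiableOn ℂ q (ball 0 r) ∧ q 0 = 0 ∧
      ∀ z ∈ ball (0 : ℂ) r, h z = h 0 * exp (q z) := by
  obtain ⟨q, hq₀, hq⟩ := ((hh.deriv isOpen_ball).div hh hne).isExactOn_ball.with_val_at 0 0
  refine ⟨q, fun z hz ↦ (hq z hz).differentiableAt.differentiableWithinAt, hq₀, fun z hz ↦ ?_⟩
  have hderiv : ∀ x ∈ ball (0 : ℂ) r, HasDerivAt (fun x ↦ h x * exp (-q x)) 0 x := by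
    intro x hx
    convert! (hh.differentiableAt (isOpen_ball.mem_nhds hx)).hasDerivAt.mul (hq x hx).fun_neg.cexp
      using 1
    have := hne x hx
    simp only [Pi.div_apply]
    field_simp
    ring
  have hconst : h z * exp (-q z) = h 0 * exp (-q 0) :=
    isOpen_ball.is_const_of_deriv_eq_zero (convex_ball (0 : ℂ) r).isPreconnected
      (fun x hx ↦ (hderiv x hx).differentiableAt.differentiableWithinAt)
      (fun x hx ↦ (hderiv x hx).deriv) hz (mem_ball_self hr)
  rw [hq₀, neg_zero, exp_zero, mul_one] at hconst
  rw [← hconst, mul_assoc, ← exp_add, neg_add_cancel, exp_zero, mul_one]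

lemma hasDerivAt_add_comp_neg {q : ℂ → ℂ} (hq : DifferentiableAt ℂ q 0) :
    HasDerivAt (fun z ↦ q z + q (-z)) 0 0 := by
  have hq' := hq.hasDerivAt
  have hneg : HasDerivAt (fun z ↦ q (-z)) (-deriv q 0) 0 := by
    simpa using HasDerivAt.comp_const_sub (f := q) 0 0 (by simpa using hq')
  simpa using hq'.fun_add hneg

section EvenPart

variable {q : ℂ → ℂ} {r M : ℝ}

lemma norm_add_comp_neg_le (hq : DifferentiableOn ℂ q (ball 0 r)) (hq₀ : q 0 = 0)
    (hM : ∀ z ∈ ball (0 : ℂ) r, ‖q z‖ ≤ M) {z : ℂ} (hz : z ∈ ball (0 : ℂ) r) :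
    ‖q z + q (-z)‖ ≤ 2 * M * (‖z‖ / r) ^ 2 := by
  have hneg : ∀ x ∈ ball (0 : ℂ) r, -x ∈ ball (0 : ℂ) r := fun x hx ↦ by simpa using hx
  have hdiff : DifferentiableOn ℂ (fun z ↦ q z + q (-z)) (ball 0 r) :=
    hq.add (hq.comp differentiable_neg.differentiableOn hneg)
  have hmaps : Set.MapsTo (fun z ↦ q z + q (-z)) (ball 0 r)
      (closedBall (q 0 + q (-0)) (2 * M)) := by
    intro x hx
    rw [neg_zero, hq₀, add_zero, mem_closedBall, dist_zero_right, two_mul]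
    exact norm_add_le_of_le (hM x hx) (hM _ (hneg x hx))
  have hr : 0 < r := (norm_nonneg z).trans_lt (by simpa using hz)
  have hzero := hasDerivAt_iff_isLittleO.1
    (hasDerivAt_add_comp_neg (hq.differentiableAt (ball_mem_nhds _ hr)))
  simpa [hq₀] using dist_le_mul_div_pow_of_mapsTo_ball_of_isLittleO (n := 1) hdiff hmaps
    (by simpa using! hzero.norm_right) hz

/- Borel–Carathéodory bounds `q` itself on half the ball; the even part `z ↦ q z + q (-z)` vanishes
to second order at `0`, so the Schwarz lemma gains the factor `(‖z‖ / r) ^ 2`. -/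
lemma norm_add_comp_neg_le_of_re_le (hq : DifferentiableOn ℂ q (ball 0 r)) (hq₀ : q 0 = 0)
    (hM : 0 < M) (hre : ∀ z ∈ ball (0 : ℂ) r, (q z).re ≤ M) {z : ℂ} (hz : ‖z‖ < r / 2) :
    ‖q z + q (-z)‖ ≤ 16 * M * (‖z‖ / r) ^ 2 := by
  have hr : 0 < r := by linarith [norm_nonneg z]
  have hsub : ball (0 : ℂ) (r / 2) ⊆ ball 0 r := ball_subset_ball (by linarith)
  have hnorm : ∀ x ∈ ball (0 : ℂ) (r / 2), ‖q x‖ ≤ 2 * M := by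
    intro x hx
    refine (borelCaratheodory_zero hM hq hre hr (hsub hx) hq₀).trans ?_
    have hx : ‖x‖ < r / 2 := by simpa using hx
    rw [div_le_iff₀ (by linarith)]
    nlinarith
  calc ‖q z + q (-z)‖ ≤ 2 * (2 * M) * (‖z‖ / (r / 2)) ^ 2 :=
        norm_add_comp_neg_le (hq.mono hsub) hq₀ hnorm (by simpa using hz)
    _ = 16 * M * (‖z‖ / r) ^ 2 := by
      field_simp
      ring

end EvenPart

lemma re_le_of_cofactor_eq_exp {g h q : ℂ → ℂ} {S : Multiset ℂ} {r B : ℝ} (hg₀ : g 0 ≠ 0)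
    (hh : Differentiable ℂ h) (hgh : ∀ z, g z = (S.map (z - ·)).prod * h z) (hr : 0 < r)
    (hS : ∀ w ∈ S, ‖w‖ ≤ r) (hq : ∀ z ∈ ball (0 : ℂ) r, h z = h 0 * exp (q z))
    (hB : ∀ z, ‖z‖ ≤ 3 * r → ‖g z‖ ≤ Real.exp B) {z : ℂ} (hz : z ∈ ball (0 : ℂ) r) :
    (q z).re ≤ B - Real.log ‖g 0‖ := by
  have hh₀ : h 0 ≠ 0 := fun h₀ ↦ hg₀ (by rw [hgh, h₀, mul_zero])
  have hzr : ‖z‖ ≤ 3 * r := by linarith [mem_ball_zero_iff.1 hz]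
  have hmul := norm_cofactor_mul_le hh hgh hr hS hB hzr
  rw [hq z hz, norm_mul, norm_exp, mul_assoc] at hmul
  have hpow : (1 : ℝ) ≤ 2 ^ S.card := one_le_pow₀ one_le_two
  have hexp : Real.exp (q z).re * ‖g 0‖ ≤ Real.exp B :=
    calc Real.exp (q z).re * ‖g 0‖ ≤ Real.exp (q z).re * (‖g 0‖ * 2 ^ S.card) := by
          gcongr
          exact le_mul_of_one_le_right (norm_nonneg _) hpow
      _ ≤ Real.exp B := le_of_mul_le_mul_left hmul (norm_pos_iff.2 hh₀)
  rw [← Real.exp_log (norm_pos_iff.2 hg₀), ← Real.exp_add, Real.exp_le_exp] at hexp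
  linarith

lemma exists_radius_of_growth {g : ℂ → ℂ} {δ : ℝ} (hδ : 0 < δ)
    (hgrowth : ∀ᶠ R : ℝ in atTop, ∀ z, ‖z‖ ≤ R → ‖g z‖ ≤ Real.exp (δ * R ^ 2)) (r₀ : ℝ) :
    ∃ r, 0 < r ∧ r₀ < r ∧ (∀ z, ‖z‖ ≤ 3 * r → ‖g z‖ ≤ Real.exp (9 * δ * r ^ 2)) ∧
      -Real.log ‖g 0‖ ≤ 9 * δ * r ^ 2 := by
  have hgrowth' := (tendsto_id.const_mul_atTop (three_pos (α := ℝ))).eventually hgrowth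
  have hlog : ∀ᶠ r : ℝ in atTop, -Real.log ‖g 0‖ ≤ 9 * δ * r ^ 2 :=
    ((tendsto_pow_atTop two_ne_zero).const_mul_atTop (by positivity)).eventually_ge_atTop _
  obtain ⟨r, hr, hr₀, hg, hl⟩ := ((eventually_gt_atTop 0).and ((eventually_gt_atTop r₀).and
    (hgrowth'.and hlog))).exists
  refine ⟨r, hr, hr₀, fun z hz ↦ (hg z hz).trans_eq ?_, hl⟩
  rw [id, mul_pow]
  ring_nf

/- A substitute for the Hadamard product of an entire function of order below `2`: multiplying the
values at `±z` removes the linear term of the exponent, so on a fixed disc the product over the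
zeros in a large disc is correct up to a constant and a factor close to `1`. -/
lemma exists_norm_mul_norm_neg_eq_exp_mul_prod {g : ℂ → ℂ} (hg : Differentiable ℂ g)
    (hg₀ : g 0 ≠ 0)
    (hgrowth : ∀ δ > 0, ∀ᶠ R : ℝ in atTop, ∀ z, ‖z‖ ≤ R → ‖g z‖ ≤ Real.exp (δ * R ^ 2))
    {r₀ ε : ℝ} (hr₀ : 0 < r₀) (hε : 0 < ε) :
    ∃ (S : Multiset ℂ) (c : ℝ), 0 < c ∧ (∀ w ∈ S, g w = 0) ∧ ∀ z, ‖z‖ ≤ r₀ →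
      ∃ η : ℝ, |η| ≤ ε ∧
        ‖g z‖ * ‖g (-z)‖ = c * Real.exp η * (S.map fun w ↦ ‖z ^ 2 - w ^ 2‖).prod := by
  obtain ⟨δ, hδ, rfl⟩ : ∃ δ > 0, ε = 288 * δ * r₀ ^ 2 :=
    ⟨ε / (288 * r₀ ^ 2), by positivity, by field_simp⟩
  obtain ⟨r, hr, hrr₀, hgr, hlog⟩ := exists_radius_of_growth hδ (hgrowth δ hδ) (2 * r₀)
  obtain ⟨S, h, hh, hgh, hS, hne⟩ := exists_eq_prod_mul_forall_ne_zero hg hg₀ hr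
  have hh₀ : h 0 ≠ 0 := hne 0 (by simpa using hr.le)
  obtain ⟨q, hq, hq₀, hhq⟩ := exists_eqOn_ball_mul_exp hh.differentiableOn hr
    fun z hz ↦ hne z (mem_ball_zero_iff.1 hz).le
  have hre : ∀ z ∈ ball (0 : ℂ) r, (q z).re ≤ 18 * δ * r ^ 2 := fun z hz ↦
    (re_le_of_cofactor_eq_exp hg₀ hh hgh hr hS hhq hgr hz).trans (by linarith)
  have heven : ∀ z, ‖z‖ ≤ r₀ → ‖q z + q (-z)‖ ≤ 288 * δ * r₀ ^ 2 := by
    intro z hz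
    calc ‖q z + q (-z)‖ ≤ 16 * (18 * δ * r ^ 2) * (‖z‖ / r) ^ 2 :=
          norm_add_comp_neg_le_of_re_le hq hq₀ (by positivity) hre (by linarith)
      _ = 288 * δ * ‖z‖ ^ 2 := by
        field_simp
        ring
      _ ≤ 288 * δ * r₀ ^ 2 := by gcongr
  refine ⟨S, ‖h 0‖ ^ 2, by positivity, fun w hw ↦ ?_, fun z hz ↦
    ⟨(q z + q (-z)).re, (abs_re_le_norm _).trans (heven z hz), ?_⟩⟩
  · rw [hgh, Multiset.prod_eq_zero (Multiset.mem_map.2 ⟨w, hw, sub_self w⟩), zero_mul]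
  · have hzr : z ∈ ball (0 : ℂ) r := mem_ball_zero_iff.2 (by linarith)
    rw [hgh z, hgh (-z), hhq z hzr, hhq (-z) (by simpa using hzr),
      ← norm_multiset_prod_sub_mul_norm_neg, add_re, Real.exp_add]
    simp only [norm_mul, norm_exp]
    ring

end ZeroFactorization

section EulerMaclaurin

open Filter Topology

lemma one_div_pow_three_le {x : ℝ} (hx : 1 < x) :
    1 / x ^ 3 ≤ 1 / (2 * x * (x - 1)) - 1 / (2 * (x + 1) * (x + 1 - 1)) := by
  have : 0 < x - 1 := sub_pos.2 hx
  rw [add_sub_cancel_right, div_sub_div _ _ (by positivity) (by positivity),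
    div_le_div_iff₀ (by positivity) (by positivity)]
  nlinarith [pow_pos (zero_lt_one.trans hx) 2]

lemma sum_range_one_div_add_pow_three_le {N : ℕ} (hN : 2 ≤ N) (K : ℕ) :
    ∑ k ∈ Finset.range K, 1 / ((N + k : ℕ) : ℝ) ^ 3 ≤ 1 / (2 * (N : ℝ) * (N - 1)) := by
  have hx : ∀ k : ℕ, (1 : ℝ) < (N + k : ℕ) := fun k ↦ by exact_mod_cast (by lia : 1 < N + k)
  let f : ℕ → ℝ := fun k ↦ 1 / (2 * ((N + k : ℕ) : ℝ) * (((N + k : ℕ) : ℝ) - 1))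
  have hf : 0 ≤ f K := by
    have := sub_pos.2 (hx K)
    positivity
  calc ∑ k ∈ Finset.range K, 1 / ((N + k : ℕ) : ℝ) ^ 3
      ≤ ∑ k ∈ Finset.range K, (f k - f (k + 1)) := by
        refine Finset.sum_le_sum fun k _ ↦ (one_div_pow_three_le (hx k)).trans_eq ?_
        simp only [f, ← add_assoc, Nat.cast_add_one]
    _ = f 0 - f K := Finset.sum_range_sub' f K
    _ ≤ 1 / (2 * (N : ℝ) * (N - 1)) := by simpa only [f, add_zero] using sub_le_self _ hf

lemma summable_one_div_add_pow_three {N : ℕ} (hN : 2 ≤ N) :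
    Summable fun k : ℕ ↦ 1 / ((N + k : ℕ) : ℝ) ^ 3 :=
  summable_of_sum_range_le (fun _ ↦ by positivity) (sum_range_one_div_add_pow_three_le hN)

lemma tsum_one_div_add_pow_three_le {N : ℕ} (hN : 2 ≤ N) :
    ∑' k : ℕ, 1 / ((N + k : ℕ) : ℝ) ^ 3 ≤ 1 / (2 * (N : ℝ) * (N - 1)) :=
  Real.tsum_le_of_sum_range_le (fun _ ↦ by positivity) (sum_range_one_div_add_pow_three_le hN)

/-- The boundary terms, at `x`, of the second order Euler–Maclaurin formula for
`(s - 1) * ∑ n ≥ x, n ^ (-s)`. -/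
noncomputable def eulerMaclaurinBoundary (s x : ℂ) : ℂ :=
  x ^ (1 - s) + (s - 1) * (x ^ (-s) / 2 + s * x ^ (-s - 1) / 12)

/-- The Euler–Maclaurin approximation to `riemannZeta₁ s = (s - 1) * riemannZeta s` with cut-off
at `N`. -/
noncomputable def eulerMaclaurinApprox (N : ℕ) (s : ℂ) : ℂ :=
  (s - 1) * ∑ n ∈ Finset.Ico 1 N, (n : ℂ) ^ (-s) + eulerMaclaurinBoundary s N

/-- A primitive in `u` of the Euler–Maclaurin remainder `B₃(u) (x + u) ^ (-s - 3)`, up to a constant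
factor: repeated integration by parts produces the Bernoulli polynomials `B₃`, `B₂`, `B₁`. -/
noncomputable def eulerMaclaurinPrimitive (s x u : ℂ) : ℂ :=
  (s - 1) * (s * (s + 1) / 6 * ((u ^ 3 - 3 / 2 * u ^ 2 + u / 2) * (x + u) ^ (-s - 2)) +
    s / 2 * ((u ^ 2 - u + 1 / 6) * (x + u) ^ (-s - 1)) + (u - 1 / 2) * (x + u) ^ (-s)) +
    (x + u) ^ (1 - s)

lemma eulerMaclaurinApprox_succ_sub {n : ℕ} (hn : 1 ≤ n) (s : ℂ) :
    eulerMaclaurinApprox (n + 1) s - eulerMaclaurinApprox n s =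
      eulerMaclaurinPrimitive s n 1 - eulerMaclaurinPrimitive s n 0 := by
  simp only [eulerMaclaurinApprox, eulerMaclaurinBoundary, eulerMaclaurinPrimitive,
    Finset.sum_Ico_succ_top hn, Nat.cast_add_one, add_zero]
  ring

lemma hasDerivAt_eulerMaclaurinPrimitive (s : ℂ) {x u : ℂ} (hxu : x + u ∈ slitPlane) :
    HasDerivAt (eulerMaclaurinPrimitive s x)
      (-((s - 1) * s * (s + 1) * (s + 2)) / 6 * (u ^ 3 - 3 / 2 * u ^ 2 + u / 2) *
        (x + u) ^ (-s - 3)) u := by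
  have hpow (c : ℂ) : HasDerivAt (fun u ↦ (x + u) ^ c) (c * (x + u) ^ (c - 1) * 1) u :=
    ((hasDerivAt_id u).const_add x).cpow_const hxu
  have hid := hasDerivAt_id u
  have hB₃ : HasDerivAt (fun u : ℂ ↦ u ^ 3 - 3 / 2 * u ^ 2 + u / 2)
      (3 * (u ^ 2 - u + 1 / 6)) u := by
    convert! ((hid.fun_pow 3).fun_sub ((hid.fun_pow 2).const_mul (3 / 2))).fun_add
      (hid.div_const 2) using 1
    simp only [id]
    norm_num
    ring
  have hB₂ : HasDerivAt (fun u : ℂ ↦ u ^ 2 - u + 1 / 6) (2 * (u - 1 / 2)) u := by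
    convert! ((hid.fun_pow 2).fun_sub hid).add_const (1 / 6) using 1
    simp only [id]
    norm_num
    ring
  have hB₁ : HasDerivAt (fun u : ℂ ↦ u - 1 / 2) 1 u := hid.sub_const _
  convert! ((((((hB₃.mul (hpow (-s - 2))).const_mul (s * (s + 1) / 6)).add
    ((hB₂.mul (hpow (-s - 1))).const_mul (s / 2))).add
    (hB₁.mul (hpow (-s)))).const_mul (s - 1)).add (hpow (1 - s))) using 1
  rw [show -s - 2 - 1 = -s - 3 by ring, show -s - 1 - 1 = -s - 2 by ring,
    show 1 - s - 1 = -s by ring]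
  ring

lemma abs_bernoulli_three_le {u : ℝ} (h₀ : 0 ≤ u) (h₁ : u ≤ 1) :
    |u ^ 3 - 3 / 2 * u ^ 2 + u / 2| ≤ 1 / 20 := by
  -- Squares centred near the critical points `1 / 2 ± √3 / 6` of the cubic.
  rw [abs_le]
  constructor
  · nlinarith [mul_nonneg (sq_nonneg (u - 79 / 100)) (by linarith : 0 ≤ u + 8 / 100)]
  · nlinarith [mul_nonneg (sq_nonneg (u - 21 / 100)) (by linarith : 0 ≤ 1 - u + 8 / 100)]

lemma norm_eulerMaclaurinApprox_succ_sub_le {n : ℕ} (hn : 1 ≤ n) {s : ℂ} (hs : -3 ≤ s.re) :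
    ‖eulerMaclaurinApprox (n + 1) s - eulerMaclaurinApprox n s‖ ≤
      ‖(s - 1) * s * (s + 1) * (s + 2)‖ / 120 * (n : ℝ) ^ (-s.re - 3) := by
  have hn₀ : (0 : ℝ) < n := by exact_mod_cast hn
  rw [eulerMaclaurinApprox_succ_sub hn]
  have hderiv : ∀ u ∈ Set.Icc (0 : ℝ) 1, HasDerivWithinAt
      (fun u : ℝ ↦ eulerMaclaurinPrimitive s n u) _ (Set.Icc 0 1) u := fun u hu ↦
    (hasDerivAt_eulerMaclaurinPrimitive s (x := n) (u := u)
      (Or.inl (by simpa using add_pos_of_pos_of_nonneg hn₀ hu.1))).comp_ofReal.hasDerivWithinAt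
  suffices ∀ u ∈ Set.Ico (0 : ℝ) 1, ‖-((s - 1) * s * (s + 1) * (s + 2)) / 6 *
      ((u : ℂ) ^ 3 - 3 / 2 * (u : ℂ) ^ 2 + u / 2) * ((n : ℂ) + u) ^ (-s - 3)‖ ≤
      ‖(s - 1) * s * (s + 1) * (s + 2)‖ / 120 * (n : ℝ) ^ (-s.re - 3) by
    simpa using norm_image_sub_le_of_norm_deriv_le_segment' hderiv this 1 (by simp)
  intro u hu
  have hnu : (0 : ℝ) < n + u := by linarith [hu.1]
  have hB₃ : ‖((u : ℂ) ^ 3 - 3 / 2 * (u : ℂ) ^ 2 + u / 2)‖ ≤ 1 / 20 := by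
    have h := abs_bernoulli_three_le hu.1 hu.2.le
    rw [← Real.norm_eq_abs, ← Complex.norm_real] at h
    push_cast at h
    exact h
  have hpow : ‖((n : ℂ) + u) ^ (-s - 3)‖ ≤ (n : ℝ) ^ (-s.re - 3) := by
    rw [← ofReal_natCast, ← ofReal_add, norm_cpow_eq_rpow_re_of_pos hnu]
    simpa using Real.rpow_le_rpow_of_nonpos hn₀ (by linarith [hu.1] : (n : ℝ) ≤ n + u)
      (by linarith : -s.re - 3 ≤ 0)
  calc _ ≤ ‖(s - 1) * s * (s + 1) * (s + 2)‖ / 6 * (1 / 20) * (n : ℝ) ^ (-s.re - 3) := by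
        rw [norm_mul, norm_mul, norm_div, norm_neg, norm_ofNat]
        gcongr
    _ = _ := by ring

lemma norm_eulerMaclaurinApprox_add_succ_sub_le {N : ℕ} (hN : 1 ≤ N) (k : ℕ) {s : ℂ}
    (hs : 0 ≤ s.re) :
    ‖eulerMaclaurinApprox (N + k + 1) s - eulerMaclaurinApprox (N + k) s‖ ≤
      ‖(s - 1) * s * (s + 1) * (s + 2)‖ / 120 * (N : ℝ) ^ (-s.re) *
        (1 / ((N + k : ℕ) : ℝ) ^ 3) := by
  refine (norm_eulerMaclaurinApprox_succ_sub_le (by lia) (by linarith)).trans ?_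
  have hN₀ : (0 : ℝ) < N := by exact_mod_cast hN
  have hNk : (N : ℝ) ≤ (N + k : ℕ) := by exact_mod_cast Nat.le_add_right N k
  rw [mul_assoc (_ / 120), Real.rpow_sub (hN₀.trans_le hNk), div_eq_mul_one_div (_ ^ _),
    show (3 : ℝ) = (3 : ℕ) by norm_num, Real.rpow_natCast]
  gcongr ?_ * (?_ * _)
  exact Real.rpow_le_rpow_of_nonpos hN₀ hNk (by linarith)

lemma norm_eulerMaclaurinApprox_add_succ_sub_le_of_norm_le {N : ℕ} (hN : 1 ≤ N) (k : ℕ) {s : ℂ}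
    (hs : 0 ≤ s.re) {A : ℝ} (hA : ‖s‖ ≤ A) :
    ‖eulerMaclaurinApprox (N + k + 1) s - eulerMaclaurinApprox (N + k) s‖ ≤
      (A + 1) * A * (A + 1) * (A + 2) / 120 * (1 / ((N + k : ℕ) : ℝ) ^ 3) := by
  have hA₀ : 0 ≤ A := (norm_nonneg s).trans hA
  have hsub : ‖s - 1‖ ≤ A + 1 := norm_sub_le_of_le hA norm_one.le
  have hadd₁ : ‖s + 1‖ ≤ A + 1 := norm_add_le_of_le hA norm_one.le
  have hadd₂ : ‖s + 2‖ ≤ A + 2 := norm_add_le_of_le hA (norm_ofNat 2).le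
  have hpow : (N : ℝ) ^ (-s.re) ≤ 1 :=
    Real.rpow_le_one_of_one_le_of_nonpos (by exact_mod_cast hN) (by linarith)
  refine (norm_eulerMaclaurinApprox_add_succ_sub_le hN k hs).trans ?_
  gcongr
  refine (mul_le_of_le_one_right (by positivity) hpow).trans ?_
  rw [norm_mul, norm_mul, norm_mul]
  gcongr

lemma differentiable_const_cpow_comp {x : ℂ} (hx : x ≠ 0) {c : ℂ → ℂ} (hc : Differentiable ℂ c) :
    Differentiable ℂ fun s ↦ x ^ c s := fun s ↦ (hc s).const_cpow (Or.inl hx)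

lemma differentiable_eulerMaclaurinApprox {N : ℕ} (hN : N ≠ 0) :
    Differentiable ℂ (eulerMaclaurinApprox N) := by
  have hN' : (N : ℂ) ≠ 0 := Nat.cast_ne_zero.2 hN
  have hsum : Differentiable ℂ fun s : ℂ ↦ ∑ n ∈ Finset.Ico 1 N, (n : ℂ) ^ (-s) :=
    Differentiable.fun_sum fun n hn ↦ differentiable_const_cpow_comp
      (Nat.cast_ne_zero.2 (by have := (Finset.mem_Ico.1 hn).1; lia)) differentiable_neg
  have h₁ := differentiable_const_cpow_comp hN' (c := fun s ↦ 1 - s) (by fun_prop)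
  have h₂ := differentiable_const_cpow_comp hN' (c := fun s ↦ -s) (by fun_prop)
  have h₃ := differentiable_const_cpow_comp hN' (c := fun s ↦ -s - 1) (by fun_prop)
  unfold eulerMaclaurinApprox eulerMaclaurinBoundary
  fun_prop

lemma tendsto_natCast_cpow_atTop_zero {c : ℂ} (hc : c.re < 0) :
    Tendsto (fun n : ℕ ↦ (n : ℂ) ^ c) atTop (𝓝 0) := by
  rw [tendsto_zero_iff_norm_tendsto_zero]
  refine ((tendsto_rpow_neg_atTop (neg_pos.2 hc)).comp tendsto_natCast_atTop_atTop).congr' ?_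
  filter_upwards [eventually_gt_atTop 0] with n hn
  rw [Function.comp_apply, neg_neg, norm_natCast_cpow_of_pos hn]

lemma tendsto_eulerMaclaurinBoundary {s : ℂ} (hs : 1 < s.re) :
    Tendsto (fun n : ℕ ↦ eulerMaclaurinBoundary s n) atTop (𝓝 0) := by
  have h₁ := tendsto_natCast_cpow_atTop_zero (c := 1 - s) (by simpa using hs)
  have h₂ := tendsto_natCast_cpow_atTop_zero (c := -s) (by simpa using one_pos.trans hs)
  have h₃ := tendsto_natCast_cpow_atTop_zero (c := -s - 1)
    (by rw [sub_re, neg_re, one_re]; linarith)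
  simpa [eulerMaclaurinBoundary] using
    h₁.add (((h₂.div_const 2).add ((h₃.const_mul s).div_const 12)).const_mul (s - 1))

lemma tendsto_sum_Ico_cpow_neg {s : ℂ} (hs : 1 < s.re) :
    Tendsto (fun N : ℕ ↦ ∑ n ∈ Finset.Ico 1 N, (n : ℂ) ^ (-s)) atTop (𝓝 (riemannZeta s)) := by
  have hs₀ : s ≠ 0 := by
    rintro rfl
    simp at hs
    linarith
  have hsum : HasSum (fun n : ℕ ↦ (n : ℂ) ^ (-s)) (riemannZeta s) := by
    rw [zeta_eq_tsum_one_div_nat_cpow hs]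
    simpa only [cpow_neg, one_div] using (summable_one_div_nat_cpow.2 hs).hasSum
  refine hsum.tendsto_sum_nat.congr' ?_
  filter_upwards [eventually_gt_atTop 0] with N hN
  rw [Finset.range_eq_Ico, Finset.sum_eq_sum_Ico_succ_bot hN, Nat.cast_zero,
    zero_cpow (neg_ne_zero.2 hs₀), zero_add]

lemma riemannZeta₁_eq_sub_one_mul {s : ℂ} (hs : s ≠ 1) :
    riemannZeta₁ s = (s - 1) * riemannZeta s := by
  rw [riemannZeta_eq_inv_sub_mul hs, mul_inv_cancel_left₀ (sub_ne_zero.2 hs)]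

lemma tendsto_eulerMaclaurinApprox {s : ℂ} (hs : 1 < s.re) :
    Tendsto (fun N ↦ eulerMaclaurinApprox N s) atTop (𝓝 (riemannZeta₁ s)) := by
  have hs₁ : s ≠ 1 := by
    rintro rfl
    simp at hs
  simpa [eulerMaclaurinApprox, riemannZeta₁_eq_sub_one_mul hs₁] using
    ((tendsto_sum_Ico_cpow_neg hs).const_mul (s - 1)).add (tendsto_eulerMaclaurinBoundary hs)

lemma summable_eulerMaclaurinApprox_succ_sub {N : ℕ} (hN : 2 ≤ N) {s : ℂ} (hs : 0 ≤ s.re) :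
    Summable fun k ↦ eulerMaclaurinApprox (N + k + 1) s - eulerMaclaurinApprox (N + k) s :=
  .of_norm_bounded ((summable_one_div_add_pow_three hN).mul_left _) fun k ↦
    norm_eulerMaclaurinApprox_add_succ_sub_le (by lia) k hs

lemma riemannZeta₁_eq_eulerMaclaurinApprox_add_tsum_of_one_lt_re {N : ℕ} (hN : 2 ≤ N) {s : ℂ}
    (hs : 1 < s.re) :
    riemannZeta₁ s = eulerMaclaurinApprox N s +
      ∑' k, (eulerMaclaurinApprox (N + k + 1) s - eulerMaclaurinApprox (N + k) s) := by
  have hsum := (summable_eulerMaclaurinApprox_succ_sub hN (by linarith : 0 ≤ s.re)).hasSum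
  have htele : Tendsto (fun K ↦ eulerMaclaurinApprox (N + K) s - eulerMaclaurinApprox N s) atTop
      (𝓝 (riemannZeta₁ s - eulerMaclaurinApprox N s)) :=
    ((tendsto_eulerMaclaurinApprox hs).comp (tendsto_add_atTop_nat N)).sub_const _ |>.congr
      fun K ↦ by simp [add_comm]
  rw [tendsto_nhds_unique hsum.tendsto_sum_nat (htele.congr fun K ↦ ?_), add_sub_cancel]
  exact (Finset.sum_range_sub (fun k ↦ eulerMaclaurinApprox (N + k) s) K).symm

lemma riemannZeta₁_eq_eulerMaclaurinApprox_add_tsum {N : ℕ} (hN : 2 ≤ N) {s : ℂ}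
    (hs : 0 < s.re) :
    riemannZeta₁ s = eulerMaclaurinApprox N s +
      ∑' k, (eulerMaclaurinApprox (N + k + 1) s - eulerMaclaurinApprox (N + k) s) := by
  let A : ℝ := ‖s‖ + 3
  let U : Set ℂ := {z | 0 < z.re} ∩ Metric.ball 0 A
  have hU : IsOpen U := (isOpen_lt continuous_const continuous_re).inter Metric.isOpen_ball
  have hUconvex : Convex ℝ U := (convex_halfSpace_re_gt 0).inter (convex_ball 0 A)
  have hdiff : DifferentiableOn ℂ (fun z ↦ eulerMaclaurinApprox N z +
      ∑' k, (eulerMaclaurinApprox (N + k + 1) z - eulerMaclaurinApprox (N + k) z)) U := by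
    refine (differentiable_eulerMaclaurinApprox (by lia)).differentiableOn.add
      (differentiableOn_tsum_of_summable_norm ((summable_one_div_add_pow_three hN).mul_left _)
        (fun k ↦ ?_) hU fun k w hw ↦ norm_eulerMaclaurinApprox_add_succ_sub_le_of_norm_le (by lia) k
          (le_of_lt hw.1) (mem_ball_zero_iff.1 hw.2).le)
    exact ((differentiable_eulerMaclaurinApprox (by lia)).sub
      (differentiable_eulerMaclaurinApprox (by lia))).differentiableOn
  have htwo : (2 : ℂ) ∈ U := by
    refine ⟨by simp, mem_ball_zero_iff.2 ?_⟩
    rw [norm_ofNat]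
    linarith [norm_nonneg s]
  have hs' : s ∈ U := ⟨hs, mem_ball_zero_iff.2 (lt_add_of_pos_right _ three_pos)⟩
  refine (differentiable_riemannZeta₁.differentiableOn.analyticOnNhd
    hU).eqOn_of_preconnected_of_eventuallyEq (hdiff.analyticOnNhd hU) hUconvex.isPreconnected
      htwo ?_ hs'
  filter_upwards [(isOpen_lt continuous_const continuous_re).mem_nhds
    (by simp : (1 : ℝ) < (2 : ℂ).re)] with z hz
  exact riemannZeta₁_eq_eulerMaclaurinApprox_add_tsum_of_one_lt_re hN hz

lemma norm_riemannZeta₁_sub_eulerMaclaurinApprox_le {N : ℕ} (hN : 2 ≤ N) {s : ℂ}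
    (hs : 0 < s.re) :
    ‖riemannZeta₁ s - eulerMaclaurinApprox N s‖ ≤ ‖(s - 1) * s * (s + 1) * (s + 2)‖ / 120 *
      (N : ℝ) ^ (-s.re) * (1 / (2 * (N : ℝ) * (N - 1))) := by
  rw [riemannZeta₁_eq_eulerMaclaurinApprox_add_tsum hN hs, add_sub_cancel_left]
  refine (tsum_of_norm_bounded ((summable_one_div_add_pow_three hN).mul_left _).hasSum
    fun k ↦ norm_eulerMaclaurinApprox_add_succ_sub_le (by lia) k hs.le).trans ?_
  rw [tsum_mul_left]
  gcongr
  exact tsum_one_div_add_pow_three_le hN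

lemma norm_riemannZeta_sub_eulerMaclaurin_le {N : ℕ} (hN : 2 ≤ N) {s : ℂ} (hs : 0 < s.re)
    (hs₁ : s ≠ 1) :
    ‖riemannZeta s - (∑ n ∈ Finset.Ico 1 N, (n : ℂ) ^ (-s) + (N : ℂ) ^ (1 - s) / (s - 1) +
      (N : ℂ) ^ (-s) / 2 + s * (N : ℂ) ^ (-s - 1) / 12)‖ ≤
      ‖s * (s + 1) * (s + 2)‖ / 120 * (N : ℝ) ^ (-s.re) * (1 / (2 * (N : ℝ) * (N - 1))) := by
  have hs₁' : s - 1 ≠ 0 := sub_ne_zero.2 hs₁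
  have hbound := norm_riemannZeta₁_sub_eulerMaclaurinApprox_le hN hs
  rw [show (s - 1) * s * (s + 1) * (s + 2) = (s - 1) * (s * (s + 1) * (s + 2)) by ring,
    norm_mul (s - 1)] at hbound
  refine le_of_mul_le_mul_left (le_of_eq_of_le ?_ (hbound.trans_eq (by ring)))
    (norm_pos_iff.2 hs₁')
  rw [← norm_mul, riemannZeta₁_eq_sub_one_mul hs₁, eulerMaclaurinApprox, eulerMaclaurinBoundary]
  congr 1
  field_simp
  ring

end EulerMaclaurin

section Xi

open Filter Topology ComplexConjugate

/-- The entire function `s * (s - 1) * completedRiemannZeta s` (twice the classical Riemann xi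
function), written through `completedRiemannZeta₀` so that its values at `0` and `1` are right. -/
noncomputable def riemannXi (s : ℂ) : ℂ := s * (s - 1) * completedRiemannZeta₀ s + 1

lemma differentiable_riemannXi : Differentiable ℂ riemannXi := by
  have := differentiable_completedZeta₀
  unfold riemannXi
  fun_prop

lemma riemannXi_zero : riemannXi 0 = 1 := by simp [riemannXi]

lemma riemannXi_one : riemannXi 1 = 1 := by simp [riemannXi]

lemma riemannXi_one_sub (s : ℂ) : riemannXi (1 - s) = riemannXi s := by
  rw [riemannXi, riemannXi, completedRiemannZeta₀_one_sub]
  ring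

lemma riemannXi_eq_mul_completedRiemannZeta {s : ℂ} (h₀ : s ≠ 0) (h₁ : s ≠ 1) :
    riemannXi s = s * (s - 1) * completedRiemannZeta s := by
  have : 1 - s ≠ 0 := sub_ne_zero.2 h₁.symm
  rw [completedRiemannZeta_eq, riemannXi]
  field_simp
  ring

lemma riemannXi_eq_mul_riemannZeta {s : ℂ} (hs : 0 < s.re) (h₁ : s ≠ 1) :
    riemannXi s = s * (s - 1) * Gammaℝ s * riemannZeta s := by
  have h₀ : s ≠ 0 := by
    rintro rfl
    simp at hs
  rw [riemannXi_eq_mul_completedRiemannZeta h₀ h₁, riemannZeta_def_of_ne_zero h₀,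
    mul_assoc _ (Gammaℝ s), mul_div_cancel₀ _ (Gammaℝ_ne_zero_of_re_pos hs)]

lemma riemannXi_eq_mul_riemannZeta₁ {s : ℂ} (hs : 0 < s.re) :
    riemannXi s = s * Gammaℝ s * riemannZeta₁ s := by
  by_cases h₁ : s = 1
  · simp [h₁, riemannXi]
  · rw [riemannXi_eq_mul_riemannZeta hs h₁, riemannZeta₁_eq_sub_one_mul h₁]
    ring

lemma Gammaℝ_conj (s : ℂ) : Gammaℝ (conj s) = conj (Gammaℝ s) := by
  have hpi : (Real.pi : ℂ).arg ≠ Real.pi := by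
    rw [arg_ofReal_of_nonneg Real.pi_pos.le]
    exact Real.pi_ne_zero.symm
  have hexp : -conj s / 2 = conj (-s / 2) := by simp [map_ofNat]
  rw [Gammaℝ_def, Gammaℝ_def, map_mul, ← Gamma_conj, hexp, cpow_conj _ _ hpi]
  simp [map_ofNat]

lemma riemannXi_conj_of_re_pos {s : ℂ} (hs : 0 < s.re) :
    riemannXi (conj s) = conj (riemannXi s) := by
  by_cases h₁ : s = 1
  · simp [h₁, riemannXi_one]
  · rw [riemannXi_eq_mul_riemannZeta hs h₁, riemannXi_eq_mul_riemannZeta (by simpa using hs)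
      (by simpa using (star_injective (R := ℂ)).ne h₁), Gammaℝ_conj, riemannZeta_conj]
    simp

lemma riemannXi_conj (s : ℂ) : riemannXi (conj s) = conj (riemannXi s) := by
  rcases lt_or_ge 0 s.re with hs | hs
  · exact riemannXi_conj_of_re_pos hs
  · have hsymm := riemannXi_conj_of_re_pos (s := 1 - s) (by rw [sub_re, one_re]; linarith)
    rwa [map_sub, map_one, riemannXi_one_sub, riemannXi_one_sub] at hsymm

section Zeros

variable {ρ : ℂ}

lemma completedRiemannZeta_eq_zero_of_riemannXi_eq_zero (h : riemannXi ρ = 0) :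
    completedRiemannZeta ρ = 0 := by
  have h₀ : ρ ≠ 0 := by
    rintro rfl
    simp [riemannXi_zero] at h
  have h₁ : ρ ≠ 1 := by
    rintro rfl
    simp [riemannXi_one] at h
  simpa [riemannXi_eq_mul_completedRiemannZeta h₀ h₁, h₀, sub_ne_zero.2 h₁] using h

lemma re_lt_one_of_riemannXi_eq_zero (h : riemannXi ρ = 0) : ρ.re < 1 := by
  contrapose! h
  have hpos : 0 < ρ.re := one_pos.trans_le h
  have h₀ : ρ ≠ 0 := by
    rintro rfl
    simp at hpos
  by_cases h₁ : ρ = 1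
  · simp [h₁, riemannXi_one]
  · rw [riemannXi_eq_mul_riemannZeta hpos h₁]
    exact mul_ne_zero (mul_ne_zero (mul_ne_zero h₀ (sub_ne_zero.2 h₁))
      (Gammaℝ_ne_zero_of_re_pos hpos)) (riemannZeta_ne_zero_of_one_le_re h)

lemma re_pos_of_riemannXi_eq_zero (h : riemannXi ρ = 0) : 0 < ρ.re := by
  have := re_lt_one_of_riemannXi_eq_zero (ρ := 1 - ρ) (by rw [riemannXi_one_sub, h])
  simpa using this

end Zeros

lemma norm_Gamma_le_Gamma_re {s : ℂ} (hs : 0 < s.re) : ‖Gamma s‖ ≤ Real.Gamma s.re := by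
  rw [Gamma_eq_integral hs, Real.Gamma_eq_integral hs, GammaIntegral]
  refine (MeasureTheory.norm_integral_le_integral_norm _).trans_eq
    (MeasureTheory.setIntegral_congr_fun measurableSet_Ioi fun x hx ↦ ?_)
  simp only [norm_mul, norm_cpow_eq_rpow_re_of_pos hx, norm_real, Real.norm_eq_abs, Real.abs_exp,
    sub_re, one_re]

lemma Gamma_add_two_le_rpow_self {x D : ℝ} (hx : 0 ≤ x) (hD : x + 2 ≤ D) :
    Real.Gamma (x + 2) ≤ D ^ D := by
  let n := ⌈x⌉₊ + 1
  have hxn : x + 2 ≤ (n : ℝ) + 1 := by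
    push_cast [n]
    linarith [Nat.le_ceil x]
  have hnD : (n : ℝ) ≤ D := by
    push_cast [n]
    linarith [Nat.ceil_lt_add_one hx]
  have : (1 : ℝ) ≤ n := by
    push_cast [n]
    linarith [Nat.le_ceil x]
  calc Real.Gamma (x + 2) ≤ Real.Gamma (n + 1) := Real.Gamma_strictMonoOn_Ici.monotoneOn
        (Set.mem_Ici.2 (by linarith)) (Set.mem_Ici.2 (by linarith)) hxn
    _ = n.factorial := Real.Gamma_nat_eq_factorial n
    _ ≤ (n : ℝ) ^ (n : ℝ) := by
      rw [Real.rpow_natCast]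
      exact_mod_cast Nat.factorial_le_pow n
    _ ≤ D ^ (n : ℝ) := Real.rpow_le_rpow (by linarith) hnD (by linarith)
    _ ≤ D ^ D := Real.rpow_le_rpow_of_exponent_le (by linarith) hnD

lemma Gamma_le_mul_rpow_self {x D : ℝ} (hx : 1 / 4 ≤ x) (hD : x + 2 ≤ D) :
    Real.Gamma x ≤ 16 * D ^ D := by
  have hrec : Real.Gamma (x + 2) = (x + 1) * x * Real.Gamma x := by
    rw [show x + 2 = x + 1 + 1 by ring, Real.Gamma_add_one (by linarith),
      Real.Gamma_add_one (by linarith), mul_assoc]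
  have hle := Gamma_add_two_le_rpow_self (by linarith) hD
  have hpos : 0 < Real.Gamma x := Real.Gamma_pos_of_pos (by linarith)
  rw [hrec] at hle
  have hcoef : 1 ≤ 16 * ((x + 1) * x) := by nlinarith
  nlinarith

lemma norm_two_cpow_le_two {w : ℂ} (hw : w.re ≤ 1) : ‖(2 : ℂ) ^ w‖ ≤ 2 := by
  rw [← ofReal_ofNat, norm_cpow_eq_rpow_re_of_pos two_pos]
  simpa using Real.rpow_le_rpow_of_exponent_le one_le_two hw

section ZetaGrowth

variable {s : ℂ} {A : ℝ}

lemma norm_riemannZeta₁_sub_eulerMaclaurinApprox_two_le (hs : 0 < s.re) (hA : ‖s‖ ≤ A) :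
    ‖riemannZeta₁ s - eulerMaclaurinApprox 2 s‖ ≤ (A + 2) ^ 4 := by
  have hA₀ : 0 ≤ A := (norm_nonneg s).trans hA
  have hpow : ((2 : ℕ) : ℝ) ^ (-s.re) ≤ 1 :=
    Real.rpow_le_one_of_one_le_of_nonpos (by norm_num) (by linarith)
  have hsub : ‖s - 1‖ ≤ A + 2 := (norm_sub_le_of_le hA norm_one.le).trans (by linarith)
  have hadd₁ : ‖s + 1‖ ≤ A + 2 := (norm_add_le_of_le hA norm_one.le).trans (by linarith)
  have hadd₂ : ‖s + 2‖ ≤ A + 2 := norm_add_le_of_le hA (norm_ofNat 2).le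
  have hpoly : ‖(s - 1) * s * (s + 1) * (s + 2)‖ ≤ (A + 2) ^ 4 := by
    rw [norm_mul, norm_mul, norm_mul]
    calc _ ≤ (A + 2) * (A + 2) * (A + 2) * (A + 2) := by
          gcongr
          linarith
      _ = (A + 2) ^ 4 := by ring
  calc _ ≤ _ := norm_riemannZeta₁_sub_eulerMaclaurinApprox_le le_rfl hs
    _ ≤ (A + 2) ^ 4 / 120 * 1 * (1 / 4) := by
      have hcoef : 1 / (2 * ((2 : ℕ) : ℝ) * (((2 : ℕ) : ℝ) - 1)) = 1 / 4 := by norm_num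
      rw [hcoef]
      gcongr
    _ ≤ (A + 2) ^ 4 := by linarith [pow_nonneg (by linarith : 0 ≤ A + 2) 4]

lemma eulerMaclaurinApprox_two (s : ℂ) : eulerMaclaurinApprox 2 s =
    (s - 1) + (2 : ℂ) ^ (1 - s) + (s - 1) * ((2 : ℂ) ^ (-s) / 2 + s * (2 : ℂ) ^ (-s - 1) / 12) := by
  simp [eulerMaclaurinApprox, eulerMaclaurinBoundary]
  ring

lemma norm_eulerMaclaurinApprox_two_le (hs : 0 < s.re) (hA : ‖s‖ ≤ A) :
    ‖eulerMaclaurinApprox 2 s‖ ≤ 3 * (A + 2) ^ 2 := by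
  have hA₀ : 0 ≤ A := (norm_nonneg s).trans hA
  have hsub : ‖s - 1‖ ≤ A + 1 := norm_sub_le_of_le hA norm_one.le
  have hpow₀ : ‖(2 : ℂ) ^ (1 - s)‖ ≤ 2 := norm_two_cpow_le_two (by simpa using hs.le)
  have hpow₁ : ‖(2 : ℂ) ^ (-s)‖ ≤ 2 := norm_two_cpow_le_two (by rw [neg_re]; linarith)
  have hpow₂ : ‖(2 : ℂ) ^ (-s - 1)‖ ≤ 2 :=
    norm_two_cpow_le_two (by rw [sub_re, neg_re, one_re]; linarith)
  rw [eulerMaclaurinApprox_two]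
  calc _ ≤ ‖s - 1‖ + ‖(2 : ℂ) ^ (1 - s)‖ +
        ‖s - 1‖ * (‖(2 : ℂ) ^ (-s)‖ / 2 + ‖s‖ * ‖(2 : ℂ) ^ (-s - 1)‖ / 12) := by
        refine norm_add_le_of_le (norm_add_le _ _) ?_
        rw [norm_mul]
        gcongr
        refine (norm_add_le _ _).trans_eq ?_
        simp only [norm_div, norm_mul, norm_ofNat]
    _ ≤ (A + 1) + 2 + (A + 1) * (2 / 2 + A * 2 / 12) := by gcongr
    _ ≤ 3 * (A + 2) ^ 2 := by nlinarith

lemma norm_riemannZeta₁_le (hs : 0 < s.re) (hA : ‖s‖ ≤ A) :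
    ‖riemannZeta₁ s‖ ≤ 4 * (A + 2) ^ 4 := by
  have hA₂ : 1 ≤ A + 2 := by linarith [(norm_nonneg s).trans hA]
  calc ‖riemannZeta₁ s‖ ≤ (A + 2) ^ 4 + 3 * (A + 2) ^ 2 := by
        rw [← sub_add_cancel (riemannZeta₁ s) (eulerMaclaurinApprox 2 s)]
        exact norm_add_le_of_le (norm_riemannZeta₁_sub_eulerMaclaurinApprox_two_le hs hA)
          (norm_eulerMaclaurinApprox_two_le hs hA)
    _ ≤ (A + 2) ^ 4 + 3 * (A + 2) ^ 4 := by
      gcongr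
      norm_num
    _ = 4 * (A + 2) ^ 4 := by ring

end ZetaGrowth

lemma norm_riemannXi_le {s : ℂ} (hs : 1 / 2 ≤ s.re) {D : ℝ} (hD : ‖s‖ + 4 ≤ D) :
    ‖riemannXi s‖ ≤ D ^ (D + 8) := by
  have hD₄ : 4 ≤ D := by linarith [norm_nonneg s]
  have hre : s.re ≤ ‖s‖ := re_le_norm s
  have hre₂ : (s / 2).re = s.re / 2 := by simp
  have hpi : ‖(Real.pi : ℂ) ^ (-s / 2)‖ ≤ 1 := by
    rw [norm_cpow_eq_rpow_re_of_pos Real.pi_pos]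
    refine Real.rpow_le_one_of_one_le_of_nonpos (by linarith [Real.pi_gt_three]) ?_
    rw [neg_div, neg_re, hre₂]
    linarith
  have hGamma : ‖Gamma (s / 2)‖ ≤ 16 * D ^ D := by
    refine (norm_Gamma_le_Gamma_re (by linarith)).trans ?_
    exact Gamma_le_mul_rpow_self (by linarith) (by linarith)
  have hzeta : ‖riemannZeta₁ s‖ ≤ 4 * D ^ 4 := by
    simpa using norm_riemannZeta₁_le (A := D - 2) (by linarith) (by linarith)
  have hcube : (64 : ℝ) ≤ D ^ 3 := by
    calc (64 : ℝ) = 4 ^ 3 := by norm_num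
      _ ≤ D ^ 3 := by gcongr
  rw [riemannXi_eq_mul_riemannZeta₁ (by linarith), Gammaℝ_def, norm_mul, norm_mul, norm_mul]
  calc _ ≤ D * (1 * (16 * D ^ D)) * (4 * D ^ 4) := by
        gcongr
        linarith
    _ = 64 * (D ^ 5 * D ^ D) := by ring
    _ ≤ D ^ 3 * (D ^ 5 * D ^ D) := by gcongr
    _ = D ^ (D + 8) := by
      rw [Real.rpow_add (by linarith), show (8 : ℝ) = (8 : ℕ) by norm_num, Real.rpow_natCast]
      ring

/-- `riemannXi` recentred at the symmetry point `1 / 2` of the functional equation, which makes it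
an even function. -/
noncomputable def xiCentered (z : ℂ) : ℂ := riemannXi (1 / 2 + z)

lemma differentiable_xiCentered : Differentiable ℂ xiCentered :=
  differentiable_riemannXi.comp (differentiable_id.const_add _)

lemma xiCentered_neg (z : ℂ) : xiCentered (-z) = xiCentered z := by
  rw [xiCentered, xiCentered, ← riemannXi_one_sub]
  ring_nf

lemma xiCentered_conj (z : ℂ) : xiCentered (conj z) = conj (xiCentered z) := by
  rw [xiCentered, xiCentered, ← riemannXi_conj]
  simp [map_ofNat]

lemma norm_xiCentered_le {z : ℂ} {R : ℝ} (hz : ‖z‖ ≤ R) :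
    ‖xiCentered z‖ ≤ (R + 5) ^ (R + 13) := by
  wlog hre : 0 ≤ z.re generalizing z
  · rw [← xiCentered_neg]
    exact this (by simpa using hz) (by rw [neg_re]; linarith)
  · rw [show R + 13 = R + 5 + 8 by ring]
    have hhalf : ‖(1 / 2 : ℂ)‖ = 1 / 2 := by norm_num
    refine norm_riemannXi_le ?_ (by linarith [norm_add_le (1 / 2 : ℂ) z])
    have : (1 / 2 + z).re = 1 / 2 + z.re := by simp
    linarith

lemma eventually_norm_xiCentered_le {δ : ℝ} (hδ : 0 < δ) :
    ∀ᶠ R : ℝ in atTop, ∀ z, ‖z‖ ≤ R → ‖xiCentered z‖ ≤ Real.exp (δ * R ^ 2) := by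
  have hlog : ∀ᶠ R : ℝ in atTop, ‖Real.log (R + 5)‖ ≤ δ / 4 * ‖R + 5‖ :=
    (tendsto_atTop_add_const_right _ 5 tendsto_id).eventually
      (Real.isLittleO_log_id_atTop.def (by positivity : 0 < δ / 4))
  filter_upwards [hlog, eventually_ge_atTop 30] with R hlogR hR z hz
  refine (norm_xiCentered_le hz).trans ?_
  rw [Real.rpow_def_of_pos (by linarith), Real.exp_le_exp]
  have hlog' : Real.log (R + 5) ≤ δ / 4 * (R + 5) := by
    rw [Real.norm_eq_abs, Real.norm_of_nonneg (by linarith)] at hlogR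
    exact (le_abs_self _).trans hlogR
  calc Real.log (R + 5) * (R + 13) ≤ δ / 4 * (R + 5) * (R + 13) := by gcongr
    _ = δ * ((R + 5) * (R + 13) / 4) := by ring
    _ ≤ δ * R ^ 2 := by
      gcongr
      nlinarith

lemma re_eulerMaclaurinApprox_two_one_half_ge :
    1 / 2 ≤ (eulerMaclaurinApprox 2 (1 / 2)).re := by
  have hcast (x : ℝ) : (2 : ℂ) ^ (x : ℂ) = (((2 : ℝ) ^ x : ℝ) : ℂ) := by
    rw [ofReal_cpow two_pos.le, ofReal_ofNat]
  have heq : eulerMaclaurinApprox 2 (1 / 2) = ((-1 / 2 + (2 : ℝ) ^ (1 / 2 : ℝ) -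
      1 / 2 * ((2 : ℝ) ^ (-1 / 2 : ℝ) / 2 + 1 / 24 * (2 : ℝ) ^ (-3 / 2 : ℝ)) : ℝ) : ℂ) := by
    rw [eulerMaclaurinApprox_two]
    push_cast [← hcast]
    ring_nf
  have hsqrt : 1.4 ≤ (2 : ℝ) ^ (1 / 2 : ℝ) := by
    rw [← Real.sqrt_eq_rpow]
    exact Real.le_sqrt_of_sq_le (by norm_num)
  have hpow₁ : (2 : ℝ) ^ (-1 / 2 : ℝ) ≤ 1 :=
    Real.rpow_le_one_of_one_le_of_nonpos one_le_two (by norm_num)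
  have hpow₂ : (2 : ℝ) ^ (-3 / 2 : ℝ) ≤ 1 :=
    Real.rpow_le_one_of_one_le_of_nonpos one_le_two (by norm_num)
  rw [heq, ofReal_re]
  linarith

lemma re_riemannZeta₁_one_half_pos : 0 < (riemannZeta₁ (1 / 2)).re := by
  have hpoly : ‖((1 / 2 : ℂ) - 1) * (1 / 2) * (1 / 2 + 1) * (1 / 2 + 2)‖ = 15 / 16 := by
    norm_num
  have hpow : ((2 : ℕ) : ℝ) ^ (-(1 / 2 : ℂ).re) ≤ 1 :=
    Real.rpow_le_one_of_one_le_of_nonpos (by norm_num) (by norm_num)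
  have herror : ‖riemannZeta₁ (1 / 2) - eulerMaclaurinApprox 2 (1 / 2)‖ ≤ 1 / 100 := by
    refine (norm_riemannZeta₁_sub_eulerMaclaurinApprox_le le_rfl (by norm_num)).trans ?_
    rw [hpoly]
    norm_num at hpow ⊢
    linarith
  have hre := abs_le.1 ((abs_re_le_norm _).trans herror)
  rw [sub_re] at hre
  linarith [re_eulerMaclaurinApprox_two_one_half_ge, hre.1]

lemma re_riemannXi_one_half_pos : 0 < (riemannXi (1 / 2)).re := by
  have : 0 < Real.Gamma (1 / 4) := Real.Gamma_pos_of_pos (by norm_num)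
  have heq : riemannXi (1 / 2) =
      (1 / 2 * (Real.pi ^ (-(1 / 4) : ℝ) * Real.Gamma (1 / 4)) : ℝ) * riemannZeta₁ (1 / 2) := by
    rw [riemannXi_eq_mul_riemannZeta₁ (by norm_num), Gammaℝ_def]
    push_cast [ofReal_cpow Real.pi_pos.le, ← Gamma_ofReal]
    norm_num
  rw [heq, re_ofReal_mul]
  exact mul_pos (by positivity) re_riemannZeta₁_one_half_pos

end Xi

section QuartetInequality

/-- The product of the squared distances from `a + i y` to the points `b` and `-b`. -/
def pairDistSq (a b y : ℝ) : ℝ := ((a - b) ^ 2 + y ^ 2) * ((a + b) ^ 2 + y ^ 2)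

lemma pairDistSq_eq (a b y : ℝ) :
    pairDistSq a b y = (y ^ 2 + a ^ 2 + b ^ 2) ^ 2 - 4 * a ^ 2 * b ^ 2 := by
  unfold pairDistSq
  ring

lemma pairDistSq_pos (a b : ℝ) {y : ℝ} (hy : y ≠ 0) : 0 < pairDistSq a b y := by
  unfold pairDistSq
  positivity

lemma pairDistSq_nonneg (a b y : ℝ) : 0 ≤ pairDistSq a b y := by
  unfold pairDistSq
  positivity

/- The abscissae `5 / 2`, `9 / 2`, `13 / 2`, `17 / 2` are those of the lines `Re s = 3, 5, 7, 9`
relative to the critical line. -/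
lemma pairDistSq_mul_le {b y : ℝ} (hb : b ^ 2 ≤ 1 / 4) (hy : (22 / 3) ^ 2 ≤ y ^ 2) :
    pairDistSq (9 / 2) b y * (pairDistSq (9 / 2) b y + 3 * pairDistSq (5 / 2) b y) *
      pairDistSq (13 / 2) b y ≤ 4 * pairDistSq (17 / 2) b y * pairDistSq (5 / 2) b y ^ 2 := by
  obtain ⟨v, hv⟩ : ∃ v, y ^ 2 = (22 / 3) ^ 2 + v := ⟨y ^ 2 - (22 / 3) ^ 2, by ring⟩
  simp only [pairDistSq_eq, hv]
  have hv₀ : 0 ≤ v := by linarith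
  have hB₀ := sq_nonneg b
  generalize b ^ 2 = B at *
  have hmonomial (i j : ℕ) : 0 ≤ v ^ i * B ^ j := by positivity
  have hmonomial' (i j : ℕ) : 0 ≤ v ^ i * B ^ j * (1 / 4 - B) :=
    mul_nonneg (hmonomial i j) (by linarith)
  linarith [hmonomial 0 1, hmonomial 0 2, hmonomial 0 3, hmonomial 1 0, hmonomial 1 1,
    hmonomial 1 2, hmonomial 1 3, hmonomial 2 0, hmonomial 2 1, hmonomial 2 2, hmonomial 3 0,
    hmonomial 3 1, hmonomial 3 2, hmonomial 4 0, hmonomial 4 1, hmonomial 5 0,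
    hmonomial' 0 3, hmonomial' 0 4, hmonomial' 1 3, hmonomial' 2 2]

lemma pow_mul_pow_le_of_mul_add_mul_le {u v w x : ℝ} (hu : 0 ≤ u) (hv : 0 ≤ v) (hx : 0 < x)
    (h : u * (u + 3 * x) * v ≤ 4 * w * x ^ 2) : u ^ 5 * v ^ 4 ≤ w ^ 4 * x ^ 5 := by
  have hamgm : 256 * (u * x ^ 3) ≤ (u + 3 * x) ^ 4 := by
    nlinarith [mul_nonneg (sq_nonneg (u - x)) (by positivity : 0 ≤ u ^ 2 + 14 * u * x + 81 * x ^ 2)]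
  refine le_of_mul_le_mul_left ?_ (by positivity : 0 < 256 * x ^ 3)
  calc 256 * x ^ 3 * (u ^ 5 * v ^ 4) = u ^ 4 * v ^ 4 * (256 * (u * x ^ 3)) := by ring
    _ ≤ u ^ 4 * v ^ 4 * (u + 3 * x) ^ 4 := by gcongr
    _ = (u * (u + 3 * x) * v) ^ 4 := by ring
    _ ≤ (4 * w * x ^ 2) ^ 4 := by gcongr
    _ = 256 * x ^ 3 * (w ^ 4 * x ^ 5) := by ring

lemma pairDistSq_pow_mul_pow_le {b y : ℝ} (hb : b ^ 2 ≤ 1 / 4) (hy : (22 / 3) ^ 2 ≤ y ^ 2) :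
    pairDistSq (9 / 2) b y ^ 5 * pairDistSq (13 / 2) b y ^ 4 ≤
      pairDistSq (17 / 2) b y ^ 4 * pairDistSq (5 / 2) b y ^ 5 := by
  have hy₀ : y ≠ 0 := by
    rintro rfl
    norm_num at hy
  exact pow_mul_pow_le_of_mul_add_mul_le (pairDistSq_nonneg _ _ _) (pairDistSq_nonneg _ _ _)
    (pairDistSq_pos _ _ hy₀) (pairDistSq_mul_le hb hy)

/-- The product of the distances from `a + i T` to the quartet of points `± w, ± conj w`. -/
noncomputable def quartetDist (T a : ℝ) (w : ℂ) : ℝ :=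
  ‖((a : ℂ) + T * I) ^ 2 - w ^ 2‖ * ‖((a : ℂ) - T * I) ^ 2 - w ^ 2‖

lemma quartetDist_nonneg (T a : ℝ) (w : ℂ) : 0 ≤ quartetDist T a w := by
  unfold quartetDist
  positivity

lemma quartetDist_sq (T a : ℝ) (w : ℂ) : quartetDist T a w ^ 2 =
    pairDistSq a w.re (T - w.im) * pairDistSq a w.re (T + w.im) := by
  rw [quartetDist, sq_sub_sq, sq_sub_sq, norm_mul, norm_mul, mul_pow, mul_pow, mul_pow,
    Complex.sq_norm, Complex.sq_norm, Complex.sq_norm, Complex.sq_norm]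
  simp only [normSq_apply, pairDistSq, add_re, sub_re, add_im, sub_im, mul_re, mul_im, ofReal_re,
    ofReal_im, I_re, I_im]
  ring

lemma quartetDist_pow_mul_pow_le {T : ℝ} {w : ℂ} (hre : w.re ^ 2 ≤ 1 / 4)
    (hsub : (22 / 3) ^ 2 ≤ (T - w.im) ^ 2) (hadd : (22 / 3) ^ 2 ≤ (T + w.im) ^ 2) :
    quartetDist T (9 / 2) w ^ 5 * quartetDist T (13 / 2) w ^ 4 ≤
      quartetDist T (17 / 2) w ^ 4 * quartetDist T (5 / 2) w ^ 5 := by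
  have hnonneg (a : ℝ) := quartetDist_nonneg T a w
  have hpos_sub (a : ℝ) := pairDistSq_nonneg a w.re (T - w.im)
  have hpos_add (a : ℝ) := pairDistSq_nonneg a w.re (T + w.im)
  refine le_of_pow_le_pow_left₀ two_ne_zero
    (mul_nonneg (pow_nonneg (hnonneg _) 4) (pow_nonneg (hnonneg _) 5)) ?_
  calc (quartetDist T (9 / 2) w ^ 5 * quartetDist T (13 / 2) w ^ 4) ^ 2
      = (quartetDist T (9 / 2) w ^ 2) ^ 5 * (quartetDist T (13 / 2) w ^ 2) ^ 4 := by ring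
    _ = (pairDistSq (9 / 2) w.re (T - w.im) ^ 5 * pairDistSq (13 / 2) w.re (T - w.im) ^ 4) *
        (pairDistSq (9 / 2) w.re (T + w.im) ^ 5 * pairDistSq (13 / 2) w.re (T + w.im) ^ 4) := by
      rw [quartetDist_sq, quartetDist_sq]
      ring
    _ ≤ (pairDistSq (17 / 2) w.re (T - w.im) ^ 4 * pairDistSq (5 / 2) w.re (T - w.im) ^ 5) *
        (pairDistSq (17 / 2) w.re (T + w.im) ^ 4 * pairDistSq (5 / 2) w.re (T + w.im) ^ 5) :=
      mul_le_mul (pairDistSq_pow_mul_pow_le hre hsub) (pairDistSq_pow_mul_pow_le hre hadd)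
        (mul_nonneg (pow_nonneg (hpos_add _) 5) (pow_nonneg (hpos_add _) 4))
        (mul_nonneg (pow_nonneg (hpos_sub _) 4) (pow_nonneg (hpos_sub _) 5))
    _ = (quartetDist T (17 / 2) w ^ 2) ^ 4 * (quartetDist T (5 / 2) w ^ 2) ^ 5 := by
      rw [quartetDist_sq, quartetDist_sq]
      ring
    _ = (quartetDist T (17 / 2) w ^ 4 * quartetDist T (5 / 2) w ^ 5) ^ 2 := by ring

lemma prod_quartetDist_nonneg (T a : ℝ) (S : Multiset ℂ) : 0 ≤ (S.map (quartetDist T a)).prod :=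
  Multiset.prod_map_nonneg fun w _ ↦ quartetDist_nonneg T a w

lemma prod_quartetDist_pow_mul_pow_le {T : ℝ} {S : Multiset ℂ}
    (hS : ∀ w ∈ S, w.re ^ 2 ≤ 1 / 4 ∧ (22 / 3) ^ 2 ≤ (T - w.im) ^ 2 ∧
      (22 / 3) ^ 2 ≤ (T + w.im) ^ 2) :
    (S.map (quartetDist T (9 / 2))).prod ^ 5 * (S.map (quartetDist T (13 / 2))).prod ^ 4 ≤
      (S.map (quartetDist T (17 / 2))).prod ^ 4 * (S.map (quartetDist T (5 / 2))).prod ^ 5 := by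
  simp only [← Multiset.prod_map_pow, ← Multiset.prod_map_mul]
  refine Multiset.prod_map_le_prod_map₀ _ _ (fun w _ ↦ ?_) fun w hw ↦ ?_
  · exact mul_nonneg (pow_nonneg (quartetDist_nonneg _ _ _) 5)
      (pow_nonneg (quartetDist_nonneg _ _ _) 4)
  · obtain ⟨hre, hsub, hadd⟩ := hS w hw
    exact quartetDist_pow_mul_pow_le hre hsub hadd

end QuartetInequality

section ZeroFreeWindow

open Filter Topology ComplexConjugate

lemma exists_norm_xiCentered_pow_four_eq (T A : ℝ) {ε : ℝ} (hε : 0 < ε) :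
    ∃ (S : Multiset ℂ) (c : ℝ), 0 < c ∧ (∀ w ∈ S, xiCentered w = 0) ∧ ∀ a : ℝ, |a| ≤ A →
      ∃ θ, |θ| ≤ ε ∧ ‖xiCentered (a + T * I)‖ ^ 4 =
        c * Real.exp θ * (S.map (quartetDist T a)).prod := by
  have hxi₀ : xiCentered 0 ≠ 0 := by
    intro h
    rw [xiCentered, add_zero] at h
    exact re_riemannXi_one_half_pos.ne' (by rw [h, zero_re])
  obtain ⟨S, c, hc, hS, hprod⟩ := exists_norm_mul_norm_neg_eq_exp_mul_prod
    differentiable_xiCentered hxi₀ (fun δ hδ ↦ eventually_norm_xiCentered_le hδ)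
    (by positivity : 0 < |A| + |T| + 1) (half_pos hε)
  refine ⟨S, c ^ 2, by positivity, hS, fun a ha ↦ ?_⟩
  have hnorm : ‖(a : ℂ)‖ + ‖(T : ℂ) * I‖ ≤ |A| + |T| + 1 := by
    rw [norm_mul, norm_I, mul_one, norm_real, norm_real, Real.norm_eq_abs, Real.norm_eq_abs]
    linarith [le_abs_self A]
  obtain ⟨η₁, hη₁, heq₁⟩ := hprod (a + T * I) ((norm_add_le _ _).trans hnorm)
  obtain ⟨η₂, hη₂, heq₂⟩ := hprod (a - T * I) ((norm_sub_le _ _).trans hnorm)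
  have hconj : ‖xiCentered (a - T * I)‖ = ‖xiCentered (a + T * I)‖ := by
    rw [← RCLike.norm_conj, ← xiCentered_conj]
    simp
  rw [xiCentered_neg] at heq₁ heq₂
  rw [hconj] at heq₂
  refine ⟨η₁ + η₂, (abs_add_le _ _).trans (by linarith), ?_⟩
  unfold quartetDist
  calc ‖xiCentered (a + T * I)‖ ^ 4 = (‖xiCentered (a + T * I)‖ * ‖xiCentered (a + T * I)‖) *
        (‖xiCentered (a + T * I)‖ * ‖xiCentered (a + T * I)‖) := by ring
    _ = _ := by
      nth_rewrite 1 [heq₁]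
      rw [heq₂, Multiset.prod_map_mul, Real.exp_add]
      ring

lemma re_sq_le_and_le_sq_im_of_xiCentered_eq_zero {T r : ℝ} (hr : 0 ≤ r)
    (hT : ∀ ρ, riemannXi ρ = 0 → r ≤ |ρ.im - T|) {w : ℂ} (hw : xiCentered w = 0) :
    w.re ^ 2 ≤ 1 / 4 ∧ r ^ 2 ≤ (T - w.im) ^ 2 ∧ r ^ 2 ≤ (T + w.im) ^ 2 := by
  have hre : (1 / 2 + w).re = 1 / 2 + w.re := by simp
  have him : (1 / 2 + w).im = w.im := by simp
  have hpos := re_pos_of_riemannXi_eq_zero hw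
  have hlt := re_lt_one_of_riemannXi_eq_zero hw
  have hconj : riemannXi (conj (1 / 2 + w)) = 0 := by
    rw [riemannXi_conj, ← xiCentered, hw, map_zero]
  have hdist := hT _ hw
  have hdist_conj := hT _ hconj
  rw [hre] at hpos hlt
  rw [him] at hdist
  rw [conj_im, him] at hdist_conj
  have hsq := pow_le_pow_left₀ hr hdist 2
  have hsq_conj := pow_le_pow_left₀ hr hdist_conj 2
  rw [sq_abs] at hsq hsq_conj
  exact ⟨by nlinarith, by linarith, by linarith⟩

lemma pow_mul_pow_le_exp_mul_of_eq_exp_mul {c ε u₁ u₂ u₃ u₄ p₁ p₂ p₃ p₄ θ₁ θ₂ θ₃ θ₄ : ℝ}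
    (hc : 0 ≤ c) (hp₁ : 0 ≤ p₁) (hp : p₁ ^ 5 * p₂ ^ 4 ≤ p₃ ^ 4 * p₄ ^ 5)
    (hθ₁ : |θ₁| ≤ ε) (hθ₂ : |θ₂| ≤ ε) (hθ₃ : |θ₃| ≤ ε) (hθ₄ : |θ₄| ≤ ε)
    (h₁ : u₁ = c * Real.exp θ₁ * p₁) (h₂ : u₂ = c * Real.exp θ₂ * p₂)
    (h₃ : u₃ = c * Real.exp θ₃ * p₃) (h₄ : u₄ = c * Real.exp θ₄ * p₄) :
    u₁ ^ 5 * u₂ ^ 4 ≤ Real.exp (18 * ε) * (u₃ ^ 4 * u₄ ^ 5) := by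
  rw [abs_le] at hθ₁ hθ₂ hθ₃ hθ₄
  have hexp₅ (x : ℝ) : Real.exp x ^ 5 = Real.exp (5 * x) := (Real.exp_nat_mul x 5).symm
  have hexp₄ (x : ℝ) : Real.exp x ^ 4 = Real.exp (4 * x) := (Real.exp_nat_mul x 4).symm
  calc u₁ ^ 5 * u₂ ^ 4 = c ^ 9 * Real.exp (5 * θ₁ + 4 * θ₂) * (p₁ ^ 5 * p₂ ^ 4) := by
        rw [h₁, h₂, Real.exp_add, ← hexp₅, ← hexp₄]
        ring
    _ ≤ c ^ 9 * Real.exp (18 * ε + (4 * θ₃ + 5 * θ₄)) * (p₃ ^ 4 * p₄ ^ 5) := by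
        have hθ : 5 * θ₁ + 4 * θ₂ ≤ 18 * ε + (4 * θ₃ + 5 * θ₄) := by linarith
        gcongr
    _ = Real.exp (18 * ε) * (u₃ ^ 4 * u₄ ^ 5) := by
        rw [h₃, h₄, Real.exp_add, Real.exp_add, ← hexp₅, ← hexp₄]
        ring

lemma norm_xiCentered_pow_le_exp_mul {T : ℝ} (hT : ∀ ρ, riemannXi ρ = 0 → 22 / 3 ≤ |ρ.im - T|)
    {ε : ℝ} (hε : 0 < ε) :
    (‖xiCentered ((9 / 2 : ℝ) + T * I)‖ ^ 5 * ‖xiCentered ((13 / 2 : ℝ) + T * I)‖ ^ 4) ^ 4 ≤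
      Real.exp (18 * ε) * (‖xiCentered ((17 / 2 : ℝ) + T * I)‖ ^ 4 *
        ‖xiCentered ((5 / 2 : ℝ) + T * I)‖ ^ 5) ^ 4 := by
  obtain ⟨S, c, hc, hS, hprod⟩ := exists_norm_xiCentered_pow_four_eq T 9 hε
  have hquartet := prod_quartetDist_pow_mul_pow_le fun w hw ↦
    re_sq_le_and_le_sq_im_of_xiCentered_eq_zero (by norm_num) hT (hS w hw)
  obtain ⟨θ₁, hθ₁, heq₁⟩ := hprod (9 / 2) (by norm_num [abs_of_pos])
  obtain ⟨θ₂, hθ₂, heq₂⟩ := hprod (13 / 2) (by norm_num [abs_of_pos])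
  obtain ⟨θ₃, hθ₃, heq₃⟩ := hprod (17 / 2) (by norm_num [abs_of_pos])
  obtain ⟨θ₄, hθ₄, heq₄⟩ := hprod (5 / 2) (by norm_num [abs_of_pos])
  have hle := pow_mul_pow_le_exp_mul_of_eq_exp_mul hc.le (prod_quartetDist_nonneg _ _ _)
    hquartet hθ₁ hθ₂ hθ₃ hθ₄ heq₁ heq₂ heq₃ heq₄
  calc _ = _ := by ring
    _ ≤ _ := hle
    _ = _ := by ring

lemma norm_riemannXi_pow_mul_pow_le {T : ℝ} (hT : ∀ ρ, riemannXi ρ = 0 → 22 / 3 ≤ |ρ.im - T|) :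
    ‖riemannXi (5 + T * I)‖ ^ 5 * ‖riemannXi (7 + T * I)‖ ^ 4 ≤
      ‖riemannXi (9 + T * I)‖ ^ 4 * ‖riemannXi (3 + T * I)‖ ^ 5 := by
  have hcentered (a : ℝ) : riemannXi ((1 / 2 + a : ℝ) + T * I) = xiCentered (a + T * I) := by
    rw [xiCentered]
    push_cast
    ring_nf
  have h₃ := hcentered (5 / 2)
  have h₅ := hcentered (9 / 2)
  have h₇ := hcentered (13 / 2)
  have h₉ := hcentered (17 / 2)
  norm_num at h₃ h₅ h₇ h₉
  refine le_of_pow_le_pow_left₀ four_ne_zero (by positivity) ?_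
  have hlim : Tendsto (fun ε : ℝ ↦ Real.exp (18 * ε) *
      (‖riemannXi (9 + T * I)‖ ^ 4 * ‖riemannXi (3 + T * I)‖ ^ 5) ^ 4) (𝓝[>] 0)
      (𝓝 (Real.exp (18 * 0) *
        (‖riemannXi (9 + T * I)‖ ^ 4 * ‖riemannXi (3 + T * I)‖ ^ 5) ^ 4)) :=
    tendsto_nhdsWithin_of_tendsto_nhds (Continuous.tendsto (by fun_prop) 0)
  rw [mul_zero, Real.exp_zero, one_mul] at hlim
  refine ge_of_tendsto hlim (eventually_nhdsWithin_of_forall fun ε hε ↦ ?_)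
  simpa [h₃, h₅, h₇, h₉] using norm_xiCentered_pow_le_exp_mul hT hε

end ZeroFreeWindow

section ZeroInWindow

lemma norm_riemannZeta_sub_one_le {k : ℕ} (hk : 3 ≤ k) {s : ℂ} (hs : k ≤ s.re) :
    ‖riemannZeta s - 1‖ ≤ 1 / 2 ^ k + 1 / (12 * 3 ^ (k - 3)) := by
  have hre : 1 < s.re := by
    have : (3 : ℝ) ≤ k := by exact_mod_cast hk
    linarith
  have hterm {m : ℕ} (hm : 1 ≤ m) : ‖1 / (m : ℂ) ^ s‖ ≤ 1 / (m : ℝ) ^ k := by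
    rw [norm_div, norm_one, norm_natCast_cpow_of_pos hm, ← Real.rpow_natCast]
    gcongr
    exact_mod_cast hm
  have hsummable : Summable fun n : ℕ ↦ 1 / ((n : ℂ) + 1) ^ s := by
    simpa using (summable_nat_add_iff 1).2 (summable_one_div_nat_cpow.2 hre)
  have htail : ‖∑' n : ℕ, 1 / (((n + 2 : ℕ) : ℂ) + 1) ^ s‖ ≤ 1 / (12 * 3 ^ (k - 3)) := by
    have hcube := tsum_one_div_add_pow_three_le (N := 3) (by norm_num)
    refine (tsum_of_norm_bounded ((summable_one_div_add_pow_three (N := 3)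
      (by norm_num)).mul_left (1 / 3 ^ (k - 3))).hasSum fun n ↦ ?_).trans ?_
    · rw [show ((n + 2 : ℕ) : ℂ) + 1 = ((3 + n : ℕ) : ℂ) by push_cast; ring]
      refine (hterm (by omega)).trans ?_
      rw [one_div_mul_one_div, show k = (k - 3) + 3 by omega, pow_add, Nat.add_sub_cancel]
      gcongr
      simp
    · rw [tsum_mul_left]
      calc _ ≤ 1 / 3 ^ (k - 3) * (1 / (2 * ((3 : ℕ) : ℝ) * (((3 : ℕ) : ℝ) - 1))) := by gcongr
        _ = 1 / (12 * 3 ^ (k - 3)) := by norm_num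
  have hsplit := hsummable.sum_add_tsum_nat_add 2
  rw [← zeta_eq_tsum_one_div_nat_add_one_cpow hre, Finset.sum_range_succ,
    Finset.sum_range_one] at hsplit
  calc ‖riemannZeta s - 1‖
      = ‖1 / ((2 : ℕ) : ℂ) ^ s + ∑' n : ℕ, 1 / (((n + 2 : ℕ) : ℂ) + 1) ^ s‖ := by
        rw [← hsplit]
        norm_num [add_assoc]
    _ ≤ 1 / 2 ^ k + 1 / (12 * 3 ^ (k - 3)) :=
        norm_add_le_of_le (by exact_mod_cast hterm one_le_two) htail

lemma norm_riemannZeta_le {k : ℕ} (hk : 3 ≤ k) {s : ℂ} (hs : k ≤ s.re) :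
    ‖riemannZeta s‖ ≤ 1 + (1 / 2 ^ k + 1 / (12 * 3 ^ (k - 3))) := by
  have := norm_sub_norm_le (riemannZeta s) 1
  rw [norm_one] at this
  linarith [norm_riemannZeta_sub_one_le hk hs]

lemma le_norm_riemannZeta {k : ℕ} (hk : 3 ≤ k) {s : ℂ} (hs : k ≤ s.re) :
    1 - (1 / 2 ^ k + 1 / (12 * 3 ^ (k - 3))) ≤ ‖riemannZeta s‖ := by
  have := norm_sub_norm_le 1 (riemannZeta s)
  rw [norm_one, norm_sub_rev] at this
  linarith [norm_riemannZeta_sub_one_le hk hs]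

section Step

variable {s : ℂ}

lemma norm_riemannXi_add_two_mul (hs : 1 < s.re) :
    ‖riemannXi (s + 2)‖ * (2 * Real.pi * ‖s - 1‖ * ‖riemannZeta s‖) =
      ‖riemannXi s‖ * (‖s + 2‖ * ‖s + 1‖ * ‖riemannZeta (s + 2)‖) := by
  have hre : 0 < (s + 2).re := by
    rw [add_re, re_ofNat]
    linarith
  have h₀ : s ≠ 0 := by
    rintro rfl
    simp at hs
    linarith
  have h₁ : s ≠ 1 := by
    rintro rfl
    simp at hs
  have h₂ : s + 2 ≠ 1 := fun h ↦ by
    have := congrArg re h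
    rw [add_re, re_ofNat, one_re] at this
    linarith
  have hpi : (Real.pi : ℂ) ≠ 0 := by exact_mod_cast Real.pi_ne_zero
  have heq : riemannXi (s + 2) * (2 * Real.pi * (s - 1) * riemannZeta s) =
      riemannXi s * ((s + 2) * (s + 1) * riemannZeta (s + 2)) := by
    rw [riemannXi_eq_mul_riemannZeta hre h₂, riemannXi_eq_mul_riemannZeta (by linarith) h₁,
      Gammaℝ_add_two h₀]
    field_simp
    ring
  simpa only [norm_mul, norm_ofNat, norm_real, Real.norm_eq_abs, abs_of_pos Real.pi_pos]
    using congrArg norm heq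

lemma mul_norm_riemannXi_le_norm_riemannXi_add_two (hs : s.re = 3) (him : 0 < s.im) :
    s.im / (2 * Real.pi) * 0.793 * ‖riemannXi s‖ ≤ ‖riemannXi (s + 2)‖ := by
  have hzeta : ‖riemannZeta s‖ ≤ 1.209 :=
    (norm_riemannZeta_le le_rfl (by simp [hs])).trans (by norm_num)
  have hzeta_pos : 0 < ‖riemannZeta s‖ := lt_of_lt_of_le (by norm_num)
    (le_norm_riemannZeta le_rfl (by simp [hs]))
  have hzeta₂ : 0.959 ≤ ‖riemannZeta (s + 2)‖ := le_trans (by norm_num)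
    (le_norm_riemannZeta (k := 5) (by norm_num) (by norm_num [hs]))
  have hsub : ‖s - 1‖ ≤ ‖s + 1‖ := by
    refine le_of_pow_le_pow_left₀ two_ne_zero (norm_nonneg _) ?_
    rw [Complex.sq_norm, Complex.sq_norm, normSq_apply, normSq_apply]
    norm_num [hs]
  have hsub_pos : 0 < ‖s - 1‖ := norm_pos_iff.2 fun h ↦ by simp [sub_eq_zero.1 h] at him
  have him_le : s.im ≤ ‖s + 2‖ := by
    simpa using (le_abs_self _).trans (abs_im_le_norm (s + 2))
  refine le_of_mul_le_mul_right ?_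
    (by positivity : 0 < 2 * Real.pi * ‖s - 1‖ * ‖riemannZeta s‖)
  rw [norm_riemannXi_add_two_mul (by rw [hs]; norm_num)]
  calc s.im / (2 * Real.pi) * 0.793 * ‖riemannXi s‖ * (2 * Real.pi * ‖s - 1‖ * ‖riemannZeta s‖)
      = ‖riemannXi s‖ * (s.im * ‖s - 1‖ * (0.793 * ‖riemannZeta s‖)) := by field_simp
    _ ≤ ‖riemannXi s‖ * (‖s + 2‖ * ‖s + 1‖ * ‖riemannZeta (s + 2)‖) := by
        gcongr
        linarith

lemma sq_norm_add_two_mul_sq_norm_add_one_le (hs : s.re = 7) (him : 29.33 ≤ s.im) :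
    ‖s + 2‖ ^ 2 * ‖s + 1‖ ^ 2 ≤ 1.13 * s.im ^ 2 * ‖s - 1‖ ^ 2 := by
  have hsq : 860 ≤ s.im ^ 2 := by nlinarith
  simp only [Complex.sq_norm, normSq_apply, add_re, add_im, sub_re, sub_im, one_re, one_im,
    re_ofNat, im_ofNat, hs]
  nlinarith

lemma norm_riemannXi_add_two_sq_le (hs : s.re = 7) (him : 29.33 ≤ s.im) :
    ‖riemannXi (s + 2)‖ ^ 2 ≤ (s.im / (2 * Real.pi)) ^ 2 * 1.156 * ‖riemannXi s‖ ^ 2 := by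
  have hzeta : 0.9911 ≤ ‖riemannZeta s‖ := le_trans (by norm_num)
    (le_norm_riemannZeta (k := 7) (by norm_num) (by simp [hs]))
  have hzeta₂ : ‖riemannZeta (s + 2)‖ ≤ 1.0021 :=
    (norm_riemannZeta_le (k := 9) (by norm_num) (by norm_num [hs])).trans (by norm_num)
  have hzeta_sq : 1.13 * ‖riemannZeta (s + 2)‖ ^ 2 ≤ 1.156 * ‖riemannZeta s‖ ^ 2 := by
    calc 1.13 * ‖riemannZeta (s + 2)‖ ^ 2 ≤ 1.13 * 1.0021 ^ 2 := by gcongr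
      _ ≤ 1.156 * 0.9911 ^ 2 := by norm_num
      _ ≤ 1.156 * ‖riemannZeta s‖ ^ 2 := by gcongr
  have hsub_pos : 0 < ‖s - 1‖ := norm_pos_iff.2 fun h ↦ by norm_num [sub_eq_zero.1 h] at him
  have : 0 < ‖riemannZeta s‖ := lt_of_lt_of_le (by norm_num) hzeta
  refine le_of_mul_le_mul_right ?_
    (by positivity : 0 < (2 * Real.pi * ‖s - 1‖ * ‖riemannZeta s‖) ^ 2)
  rw [← mul_pow, norm_riemannXi_add_two_mul (by rw [hs]; norm_num)]
  calc (‖riemannXi s‖ * (‖s + 2‖ * ‖s + 1‖ * ‖riemannZeta (s + 2)‖)) ^ 2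
      = ‖riemannXi s‖ ^ 2 * (‖s + 2‖ ^ 2 * ‖s + 1‖ ^ 2 * ‖riemannZeta (s + 2)‖ ^ 2) := by ring
    _ ≤ ‖riemannXi s‖ ^ 2 * (1.13 * s.im ^ 2 * ‖s - 1‖ ^ 2 * ‖riemannZeta (s + 2)‖ ^ 2) := by
        gcongr _ * (?_ * _)
        exact sq_norm_add_two_mul_sq_norm_add_one_le hs him
    _ = ‖riemannXi s‖ ^ 2 * s.im ^ 2 * ‖s - 1‖ ^ 2 * (1.13 * ‖riemannZeta (s + 2)‖ ^ 2) := by ring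
    _ ≤ ‖riemannXi s‖ ^ 2 * s.im ^ 2 * ‖s - 1‖ ^ 2 * (1.156 * ‖riemannZeta s‖ ^ 2) := by gcongr
    _ = (s.im / (2 * Real.pi)) ^ 2 * 1.156 * ‖riemannXi s‖ ^ 2 *
        (2 * Real.pi * ‖s - 1‖ * ‖riemannZeta s‖) ^ 2 := by field_simp

end Step

lemma norm_riemannXi_pos_of_one_le_re {s : ℂ} (hs : 1 ≤ s.re) : 0 < ‖riemannXi s‖ :=
  norm_pos_iff.2 fun h ↦ (re_lt_one_of_riemannXi_eq_zero h).not_ge hs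

theorem exists_riemannXi_eq_zero_abs_im_sub_lt {T : ℝ} (hT : 29.33 ≤ T) :
    ∃ ρ, riemannXi ρ = 0 ∧ |ρ.im - T| < 22 / 3 := by
  by_contra! hzeros
  have hle := norm_riemannXi_pow_mul_pow_le hzeros
  have hlower := mul_norm_riemannXi_le_norm_riemannXi_add_two (s := 3 + T * I) (by simp)
    (by simpa using (by linarith : 0 < T))
  have hupper := norm_riemannXi_add_two_sq_le (s := 7 + T * I) (by simp) (by simpa using hT)
  have hpos₃ := norm_riemannXi_pos_of_one_le_re (s := 3 + T * I) (by simp)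
  have hpos₇ := norm_riemannXi_pos_of_one_le_re (s := 7 + T * I) (by simp)
  rw [show (3 + T * I + 2 : ℂ) = 5 + T * I by ring,
    show (3 + T * I).im = T by simp] at hlower
  rw [show (7 + T * I + 2 : ℂ) = 9 + T * I by ring,
    show (7 + T * I).im = T by simp] at hupper
  have hratio : 4.667 ≤ T / (2 * Real.pi) := by
    rw [le_div_iff₀ (by positivity)]
    linarith [Real.pi_lt_d4]
  generalize T / (2 * Real.pi) = X at *
  generalize ‖riemannXi (3 + T * I)‖ = x₃ at *
  generalize ‖riemannXi (7 + T * I)‖ = x₇ at *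
  have hchain : x₃ ^ 5 * x₇ ^ 4 * X ^ 4 * (X * 0.793 ^ 5) ≤
      x₃ ^ 5 * x₇ ^ 4 * X ^ 4 * 1.156 ^ 2 := by
    calc _ = (X * 0.793 * x₃) ^ 5 * x₇ ^ 4 := by ring
      _ ≤ ‖riemannXi (5 + T * I)‖ ^ 5 * x₇ ^ 4 := by gcongr
      _ ≤ (‖riemannXi (9 + T * I)‖ ^ 2) ^ 2 * x₃ ^ 5 := hle.trans_eq (by ring)
      _ ≤ (X ^ 2 * 1.156 * x₇ ^ 2) ^ 2 * x₃ ^ 5 := by gcongr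
      _ = _ := by ring
  have hcontra := le_of_mul_le_mul_left hchain (by positivity)
  norm_num at hcontra
  linarith

end ZeroInWindow

section ZetaOnCriticalLine

lemma re_natCast_cpow_neg {n : ℕ} (hn : n ≠ 0) (s : ℂ) :
    ((n : ℂ) ^ (-s)).re = (n : ℝ) ^ (-s.re) * Real.cos (s.im * Real.log n) := by
  rw [cpow_def_of_ne_zero (Nat.cast_ne_zero.2 hn), ← natCast_log, exp_re, re_ofReal_mul,
    im_ofReal_mul, neg_im, mul_neg, Real.cos_neg, mul_comm _ s.im, ← neg_re,
    Real.rpow_def_of_pos (by positivity)]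

lemma rpow_neg_one_half_eq_inv_sqrt {x : ℝ} (hx : 0 ≤ x) : x ^ (-(1 / 2) : ℝ) = (√x)⁻¹ := by
  rw [Real.rpow_neg hx, Real.sqrt_eq_rpow]

lemma norm_le_im_add_sq_div {z : ℂ} (hz : 0 < z.im) : ‖z‖ ≤ z.im + z.re ^ 2 / (2 * z.im) := by
  have hsq : (z.im + z.re ^ 2 / (2 * z.im)) ^ 2 =
      z.re ^ 2 + z.im ^ 2 + (z.re ^ 2 / (2 * z.im)) ^ 2 := by
    field_simp
    ring
  refine le_of_sq_le_sq ?_ (by positivity)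
  rw [Complex.sq_norm, normSq_apply, hsq]
  linarith [sq_nonneg (z.re ^ 2 / (2 * z.im))]

/-- The error bound, up to the factor `1 / √N`, for approximating `ζ (1 / 2 + t * I)` by the partial
sum `∑ n < N, n ^ (-(1 / 2 + t * I))`. The first three summands bound the boundary terms of the
Euler–Maclaurin formula and the last one bounds its remainder. -/
noncomputable def criticalLineError (N : ℕ) (t : ℝ) : ℝ :=
  N / t + 1 / 2 + (t + 1 / (8 * t)) / (12 * N) +
    (t + 1 / (8 * t)) * (t + 9 / (8 * t)) * (t + 25 / (8 * t)) / (240 * N * (N - 1))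

section

variable {s : ℂ}

lemma norm_le_of_re_eq_one_half (hre : s.re = 1 / 2) (him : 0 < s.im) :
    ‖s‖ ≤ s.im + 1 / (8 * s.im) := by
  refine (norm_le_im_add_sq_div him).trans_eq ?_
  rw [hre]
  ring

lemma norm_mul_add_one_mul_add_two_le_of_re_eq_one_half (hre : s.re = 1 / 2) (him : 0 < s.im) :
    ‖s * (s + 1) * (s + 2)‖ ≤
      (s.im + 1 / (8 * s.im)) * (s.im + 9 / (8 * s.im)) * (s.im + 25 / (8 * s.im)) := by
  have hone : ‖s + 1‖ ≤ s.im + 9 / (8 * s.im) := by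
    refine (norm_le_im_add_sq_div (by simpa using him)).trans_eq ?_
    rw [add_re, add_im, hre, one_re, one_im]
    ring
  have htwo : ‖s + 2‖ ≤ s.im + 25 / (8 * s.im) := by
    refine (norm_le_im_add_sq_div (by simpa using him)).trans_eq ?_
    rw [add_re, add_im, hre, re_ofNat, im_ofNat]
    ring
  rw [norm_mul, norm_mul]
  gcongr
  exact norm_le_of_re_eq_one_half hre him

lemma norm_eulerMaclaurin_boundary_le_of_re_eq_one_half (hre : s.re = 1 / 2) (him : 0 < s.im)
    {N : ℕ} (hN : N ≠ 0) :
    ‖(N : ℂ) ^ (1 - s) / (s - 1) + (N : ℂ) ^ (-s) / 2 + s * (N : ℂ) ^ (-s - 1) / 12‖ ≤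
      (N / s.im + 1 / 2 + (s.im + 1 / (8 * s.im)) / (12 * N)) * (√N)⁻¹ := by
  have hN' : (N : ℂ) ≠ 0 := Nat.cast_ne_zero.2 hN
  have hcpow : ‖(N : ℂ) ^ (-s)‖ = (√N)⁻¹ := by
    rw [norm_natCast_cpow_of_pos (Nat.pos_of_ne_zero hN), neg_re, hre,
      rpow_neg_one_half_eq_inv_sqrt N.cast_nonneg]
  have him_le : s.im ≤ ‖s - 1‖ := by simpa using (le_abs_self _).trans (abs_im_le_norm (s - 1))
  have hsplit : (N : ℂ) ^ (1 - s) / (s - 1) + (N : ℂ) ^ (-s) / 2 + s * (N : ℂ) ^ (-s - 1) / 12 =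
      (N / (s - 1) + 1 / 2 + s / (12 * N)) * (N : ℂ) ^ (-s) := by
    rw [sub_eq_add_neg 1 s, cpow_add _ _ hN', cpow_sub _ _ hN', cpow_one]
    ring
  rw [hsplit, norm_mul, hcpow]
  gcongr
  refine norm_add₃_le.trans ?_
  simp only [norm_div, norm_mul, norm_natCast, norm_ofNat, norm_one]
  gcongr
  exact norm_le_of_re_eq_one_half hre him

lemma sum_cos_sub_le_re_riemannZeta (hre : s.re = 1 / 2) (him : 0 < s.im) {N : ℕ}
    (hN : 2 ≤ N) :
    ∑ n ∈ Finset.Ico 1 N, (√n)⁻¹ * Real.cos (s.im * Real.log n) -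
      criticalLineError N s.im * (√N)⁻¹ ≤
      (riemannZeta s).re := by
  have hN₁ : (1 : ℝ) < N := by exact_mod_cast hN
  have hs₁ : s ≠ 1 := fun h ↦ by simp [h] at him
  have hsum : (∑ n ∈ Finset.Ico 1 N, (n : ℂ) ^ (-s)).re =
      ∑ n ∈ Finset.Ico 1 N, (√n)⁻¹ * Real.cos (s.im * Real.log n) := by
    rw [re_sum]
    refine Finset.sum_congr rfl fun n hn ↦ ?_
    rw [re_natCast_cpow_neg (Nat.pos_iff_ne_zero.1 (Finset.mem_Ico.1 hn).1), hre,
      rpow_neg_one_half_eq_inv_sqrt n.cast_nonneg]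
  have hremainder : ‖s * (s + 1) * (s + 2)‖ / 120 * (N : ℝ) ^ (-s.re) *
      (1 / (2 * (N : ℝ) * (N - 1))) ≤
      (s.im + 1 / (8 * s.im)) * (s.im + 9 / (8 * s.im)) * (s.im + 25 / (8 * s.im)) / 120 *
        (√N)⁻¹ * (1 / (2 * (N : ℝ) * (N - 1))) := by
    rw [hre, rpow_neg_one_half_eq_inv_sqrt N.cast_nonneg]
    have : 0 ≤ 1 / (2 * (N : ℝ) * (N - 1)) := by have := sub_pos.2 hN₁; positivity
    gcongr
    exact norm_mul_add_one_mul_add_two_le_of_re_eq_one_half hre him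
  have hmain := (abs_le.1 ((abs_re_le_norm _).trans
    ((norm_riemannZeta_sub_eulerMaclaurin_le hN (hre ▸ by norm_num) hs₁).trans hremainder))).1
  have hboundary := (abs_le.1 ((abs_re_le_norm _).trans
    (norm_eulerMaclaurin_boundary_le_of_re_eq_one_half hre him (by lia : N ≠ 0)))).1
  rw [sub_re, add_assoc, add_assoc, add_re, ← add_assoc, hsum] at hmain
  have hN₁' := (sub_pos.2 hN₁).ne'
  have hfactor : (240 * (N : ℝ) * (N - 1))⁻¹ = 1 / 120 * (1 / (2 * (N : ℝ) * (N - 1))) := by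
    field_simp
    norm_num
  rw [criticalLineError, div_eq_mul_inv _ (240 * (N : ℝ) * (N - 1)), hfactor]
  linarith

end

lemma abs_inv_sqrt_sub_le {n w δ : ℝ} (hn : 0 < n) (hδ : 0 ≤ δ) (hw : δ < w)
    (hlower : (w - δ) ^ 2 * n ≤ 1) (hupper : 1 ≤ (w + δ) ^ 2 * n) : |(√n)⁻¹ - w| ≤ δ := by
  have hinv : (√n)⁻¹ ^ 2 * n = 1 := by
    rw [inv_pow, Real.sq_sqrt hn.le, inv_mul_cancel₀ hn.ne']
  have hlower' : w - δ ≤ (√n)⁻¹ :=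
    le_of_sq_le_sq (le_of_mul_le_mul_right (hlower.trans_eq hinv.symm) hn) (by positivity)
  have hupper' : (√n)⁻¹ ≤ w + δ :=
    le_of_sq_le_sq (le_of_mul_le_mul_right (hinv.trans_le hupper) hn) (by linarith)
  exact abs_le.2 ⟨by linarith, by linarith⟩

lemma mul_cos_sub_le_mul_cos {u w δ : ℝ} (h : |u - w| ≤ δ) (x : ℝ) :
    w * Real.cos x - δ ≤ u * Real.cos x := by
  have hbound : |(u - w) * Real.cos x| ≤ δ := by
    rw [abs_mul]
    exact (mul_le_of_le_one_right (abs_nonneg _) (Real.abs_cos_le_one x)).trans h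
  linarith [(abs_le.1 hbound).1]

lemma cos_log_combination_le_re_riemannZeta {t : ℝ} (ht : 0 < t) :
    1 + 0.70711 * Real.cos (t * Real.log 2) + 0.57735 * Real.cos (t * Real.log 3) +
      0.5 * Real.cos (t * Real.log 4) + 0.44721 * Real.cos (t * Real.log 5) +
      0.40825 * Real.cos (t * Real.log 6) + 0.37796 * Real.cos (t * Real.log 7) - 0.00005 -
      criticalLineError 8 t * 0.35356 ≤
      (riemannZeta (1 / 2 + t * I)).re := by
  have hzeta := sum_cos_sub_le_re_riemannZeta (s := 1 / 2 + t * I) (by simp) (by simpa using ht)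
    (N := 8) (by norm_num)
  have him : (1 / 2 + t * I : ℂ).im = t := by simp
  rw [him] at hzeta
  norm_num [Finset.sum_Ico_succ_top] at hzeta
  have hinv_sqrt_eight : (√8)⁻¹ ≤ 0.35356 := by
    have := (abs_le.1 (abs_inv_sqrt_sub_le (n := 8) (w := 0.35355) (δ := 0.00001) (by norm_num)
      (by norm_num) (by norm_num) (by norm_num) (by norm_num))).2
    linarith
  have herror : criticalLineError 8 t * (√8)⁻¹ ≤ criticalLineError 8 t * 0.35356 := by
    refine mul_le_mul_of_nonneg_left hinv_sqrt_eight ?_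
    norm_num [criticalLineError]
    positivity
  have hterm {n w : ℝ} (hn : 0 < n) (hw : 0.00001 < w) (hlower : (w - 0.00001) ^ 2 * n ≤ 1)
      (hupper : 1 ≤ (w + 0.00001) ^ 2 * n) :=
    mul_cos_sub_le_mul_cos (abs_inv_sqrt_sub_le hn (by norm_num) hw hlower hupper)
      (t * Real.log n)
  have htwo := hterm (n := 2) (w := 0.70711) (by norm_num) (by norm_num) (by norm_num)
    (by norm_num)
  have hthree := hterm (n := 3) (w := 0.57735) (by norm_num) (by norm_num) (by norm_num)
    (by norm_num)
  have hfive := hterm (n := 5) (w := 0.44721) (by norm_num) (by norm_num) (by norm_num)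
    (by norm_num)
  have hsix := hterm (n := 6) (w := 0.40825) (by norm_num) (by norm_num) (by norm_num)
    (by norm_num)
  have hseven := hterm (n := 7) (w := 0.37796) (by norm_num) (by norm_num) (by norm_num)
    (by norm_num)
  linarith

lemma log_four_eq : Real.log 4 = 2 * Real.log 2 := by
  rw [show (4 : ℝ) = 2 ^ 2 by norm_num, Real.log_pow, Nat.cast_ofNat]

lemma log_six_eq : Real.log 6 = Real.log 2 + Real.log 3 := by
  rw [← Real.log_mul two_ne_zero three_ne_zero]
  norm_num

-- `7 ^ 4 = 2401` is close to `2400 = 2 ^ 5 * 3 * 5 ^ 2`.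
lemma log_seven_mem_Ioo : Real.log 7 ∈ Set.Ioo 1.9458 1.946 := by
  have hlog_2400 : Real.log 2400 = 5 * Real.log 2 + Real.log 3 + 2 * Real.log 5 := by
    rw [show (2400 : ℝ) = 2 ^ 5 * 3 * 5 ^ 2 by norm_num, Real.log_mul (by norm_num) (by norm_num),
      Real.log_mul (by norm_num) (by norm_num), Real.log_pow, Real.log_pow]
    norm_num
  have hlog_2401 : Real.log 2401 = 4 * Real.log 7 := by
    rw [show (2401 : ℝ) = 7 ^ 4 by norm_num, Real.log_pow, Nat.cast_ofNat]
  have hlower : Real.log 2400 < Real.log 2401 := Real.log_lt_log (by norm_num) (by norm_num)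
  have hupper : Real.log 2401 - Real.log 2400 ≤ 2401 / 2400 - 1 := by
    rw [← Real.log_div (by norm_num) (by norm_num)]
    exact Real.log_le_sub_one_of_pos (by norm_num)
  constructor <;>
    linarith [Real.log_two_gt_d9, Real.log_two_lt_d9, Real.log_three_gt_d9, Real.log_three_lt_d9,
      Real.log_five_gt_d9, Real.log_five_lt_d9]

lemma one_sub_sq_div_two_le_cos_of_abs_sub_le {x r : ℝ} (m : ℕ)
    (h : |x - m * (2 * Real.pi)| ≤ r) : 1 - r ^ 2 / 2 ≤ Real.cos x := by
  rw [← Real.cos_sub_nat_mul_two_pi x m]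
  linarith [Real.one_sub_sq_div_two_le_cos (x := x - m * (2 * Real.pi)),
    sq_le_sq.2 (h.trans (le_abs_self r))]

lemma cos_le_sq_div_two_sub_one_of_abs_sub_le {x r : ℝ} (m : ℕ)
    (h : |x - (2 * m + 1) * Real.pi| ≤ r) : Real.cos x ≤ r ^ 2 / 2 - 1 := by
  have hshift : |x - Real.pi - m * (2 * Real.pi)| ≤ r := by
    rwa [show x - Real.pi - m * (2 * Real.pi) = x - (2 * m + 1) * Real.pi by ring]
  have hcos := one_sub_sq_div_two_le_cos_of_abs_sub_le m hshift
  rw [Real.cos_sub_pi] at hcos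
  linarith

lemma abs_cos_le_abs_sub (x : ℝ) (k : ℕ) : |Real.cos x| ≤ |x - (2 * k + 1) * (Real.pi / 2)| := by
  have hsin : |Real.cos x| = |Real.sin (x - (2 * k + 1) * (Real.pi / 2))| := by
    rw [show x - (2 * k + 1) * (Real.pi / 2) = x - Real.pi / 2 - k * Real.pi by ring,
      Real.sin_sub_nat_mul_pi, abs_mul, abs_neg_one_pow, one_mul, Real.sin_sub_pi_div_two, abs_neg]
  exact hsin.trans_le Real.abs_sin_le_abs

lemma re_riemannZeta_one_half_add_17_mul_I_pos :
    0 < (riemannZeta (1 / 2 + (17 : ℝ) * I)).re := by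
  have hzeta := cos_log_combination_le_re_riemannZeta (t := 17) (by norm_num)
  have hcos_two : 1 - 0.79 ^ 2 / 2 ≤ Real.cos (17 * Real.log 2) :=
    one_sub_sq_div_two_le_cos_of_abs_sub_le 2 (abs_le.2
      ⟨by linarith [Real.log_two_gt_d9, Real.pi_lt_d6],
        by linarith [Real.log_two_lt_d9, Real.pi_gt_d6]⟩)
  have hcos_three : 1 - 0.18 ^ 2 / 2 ≤ Real.cos (17 * Real.log 3) :=
    one_sub_sq_div_two_le_cos_of_abs_sub_le 3 (abs_le.2
      ⟨by linarith [Real.log_three_gt_d9, Real.pi_lt_d6],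
        by linarith [Real.log_three_lt_d9, Real.pi_gt_d6]⟩)
  have hcos_four : |Real.cos (17 * Real.log 4)| ≤ 0.01 :=
    (abs_cos_le_abs_sub _ 7).trans (abs_le.2
      ⟨by linarith [log_four_eq, Real.log_two_gt_d9, Real.pi_lt_d6],
        by linarith [log_four_eq, Real.log_two_lt_d9, Real.pi_gt_d6]⟩)
  have herror : criticalLineError 8 17 * 0.35356 ≤ 0.556 := by norm_num [criticalLineError]
  linarith [neg_abs_le (Real.cos (17 * Real.log 4)), Real.neg_one_le_cos (17 * Real.log 5),
    Real.neg_one_le_cos (17 * Real.log 6), Real.neg_one_le_cos (17 * Real.log 7)]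

lemma re_riemannZeta_one_half_add_27_mul_I_pos :
    0 < (riemannZeta (1 / 2 + (27 : ℝ) * I)).re := by
  have hzeta := cos_log_combination_le_re_riemannZeta (t := 27) (by norm_num)
  have hcos_two : 1 - 0.14 ^ 2 / 2 ≤ Real.cos (27 * Real.log 2) :=
    one_sub_sq_div_two_le_cos_of_abs_sub_le 3 (abs_le.2
      ⟨by linarith [Real.log_two_gt_d9, Real.pi_lt_d6],
        by linarith [Real.log_two_lt_d9, Real.pi_gt_d6]⟩)
  have hcos_three : |Real.cos (27 * Real.log 3)| ≤ 0.19 :=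
    (abs_cos_le_abs_sub _ 9).trans (abs_le.2
      ⟨by linarith [Real.log_three_gt_d9, Real.pi_lt_d6],
        by linarith [Real.log_three_lt_d9, Real.pi_gt_d6]⟩)
  have hcos_four : 1 - 0.27 ^ 2 / 2 ≤ Real.cos (27 * Real.log 4) :=
    one_sub_sq_div_two_le_cos_of_abs_sub_le 6 (abs_le.2
      ⟨by linarith [log_four_eq, Real.log_two_gt_d9, Real.pi_lt_d6],
        by linarith [log_four_eq, Real.log_two_lt_d9, Real.pi_gt_d6]⟩)
  have hcos_five : 1 - 0.53 ^ 2 / 2 ≤ Real.cos (27 * Real.log 5) :=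
    one_sub_sq_div_two_le_cos_of_abs_sub_le 7 (abs_le.2
      ⟨by linarith [Real.log_five_gt_d9, Real.pi_lt_d6],
        by linarith [Real.log_five_lt_d9, Real.pi_gt_d6]⟩)
  have herror : criticalLineError 8 27 * 0.35356 ≤ 0.962 := by norm_num [criticalLineError]
  linarith [neg_abs_le (Real.cos (27 * Real.log 3)), Real.neg_one_le_cos (27 * Real.log 6),
    Real.neg_one_le_cos (27 * Real.log 7)]

lemma cos_combination_two_four_ge :
    -0.3322 ≤ 0.70711 * Real.cos (22 * Real.log 2) + 0.5 * Real.cos (22 * Real.log 4) := by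
  have hcos_two : Real.cos (22 * Real.log 2) ≤ 0.4588 ^ 2 / 2 - 1 :=
    cos_le_sq_div_two_sub_one_of_abs_sub_le 2 (abs_le.2
      ⟨by linarith [Real.log_two_gt_d9, Real.pi_lt_d6],
        by linarith [Real.log_two_lt_d9, Real.pi_gt_d6]⟩)
  rw [log_four_eq, mul_left_comm, Real.cos_two_mul]
  nlinarith

lemma re_riemannZeta_one_half_add_22_mul_I_pos :
    0 < (riemannZeta (1 / 2 + (22 : ℝ) * I)).re := by
  have hzeta := cos_log_combination_le_re_riemannZeta (t := 22) (by norm_num)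
  have hcos_three : 1 - 0.964 ^ 2 / 2 ≤ Real.cos (22 * Real.log 3) :=
    one_sub_sq_div_two_le_cos_of_abs_sub_le 4 (abs_le.2
      ⟨by linarith [Real.log_three_gt_d9, Real.pi_lt_d6],
        by linarith [Real.log_three_lt_d9, Real.pi_gt_d6]⟩)
  have hcos_five : |Real.cos (22 * Real.log 5)| ≤ 0.721 :=
    (abs_cos_le_abs_sub _ 11).trans (abs_le.2
      ⟨by linarith [Real.log_five_gt_d9, Real.pi_lt_d6],
        by linarith [Real.log_five_lt_d9, Real.pi_gt_d6]⟩)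
  have hcos_six : |Real.cos (22 * Real.log 6)| ≤ 0.149 :=
    (abs_cos_le_abs_sub _ 12).trans (abs_le.2
      ⟨by linarith [log_six_eq, Real.log_two_gt_d9, Real.log_three_gt_d9, Real.pi_lt_d6],
        by linarith [log_six_eq, Real.log_two_lt_d9, Real.log_three_lt_d9, Real.pi_gt_d6]⟩)
  have hcos_seven : 1 - 1.175 ^ 2 / 2 ≤ Real.cos (22 * Real.log 7) :=
    one_sub_sq_div_two_le_cos_of_abs_sub_le 7 (abs_le.2
      ⟨by linarith [log_seven_mem_Ioo.1, Real.pi_lt_d6],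
        by linarith [log_seven_mem_Ioo.2, Real.pi_gt_d6]⟩)
  have herror : criticalLineError 8 22 * 0.35356 ≤ 0.67 := by norm_num [criticalLineError]
  linarith [cos_combination_two_four_ge, neg_abs_le (Real.cos (22 * Real.log 5)),
    neg_abs_le (Real.cos (22 * Real.log 6))]

end ZetaOnCriticalLine

section StirlingPhase

open Filter Topology

/-- The principal part of Stirling's formula for `log Γ`, without the real constant
`log (2 * π) / 2`, which does not affect arguments. -/
noncomputable def stirlingLog (z : ℂ) : ℂ := (z - 1 / 2) * log z - z

/-- The amount by which `stirlingLog` fails to satisfy the functional equation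
`log Γ (z + 1) = log Γ z + log z`. -/
noncomputable def stirlingDefect (z : ℂ) : ℂ := stirlingLog (z + 1) - stirlingLog z - log z

lemma log_add_one_eq_add_log {z : ℂ} (hz : 0 < z.re) :
    log (z + 1) = log z + log (1 + z⁻¹) := by
  have hne : z ≠ 0 := fun h ↦ by simp [h] at hz
  have hinv : 0 < (1 + z⁻¹).re := by
    rw [add_re, one_re, inv_re]
    exact add_pos_of_pos_of_nonneg one_pos (div_nonneg hz.le (normSq_nonneg z))
  have hne' : 1 + z⁻¹ ≠ 0 := fun h ↦ by simp [h] at hinv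
  have harg := abs_lt.1 (abs_arg_lt_pi_div_two_iff.2 (Or.inl hz))
  have harg' := abs_lt.1 (abs_arg_lt_pi_div_two_iff.2 (Or.inl hinv))
  rw [← (log_mul_eq_add_log_iff hne hne').2 ⟨by linarith, by linarith⟩, mul_add,
    mul_inv_cancel₀ hne, mul_one]

lemma stirlingDefect_eq {z : ℂ} (hz : 0 < z.re) :
    stirlingDefect z = (z + 1 / 2) * log (1 + z⁻¹) - 1 := by
  rw [stirlingDefect, stirlingLog, stirlingLog, log_add_one_eq_add_log hz]
  ring

lemma norm_log_one_add_sub_le {x : ℂ} (hx : ‖x‖ ≤ 1 / 2) :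
    ‖log (1 + x) - (x - x ^ 2 / 2)‖ ≤ 2 / 3 * ‖x‖ ^ 3 := by
  have htaylor := norm_log_sub_logTaylor_le 2 (z := x) (by linarith)
  have hpoly : logTaylor (2 + 1) x = x - x ^ 2 / 2 := by
    norm_num [logTaylor_succ, logTaylor_zero]
    ring
  have hinv : (1 - ‖x‖)⁻¹ ≤ 2 := by
    rw [inv_le_comm₀ (by linarith) two_pos]
    linarith
  rw [hpoly] at htaylor
  calc _ ≤ ‖x‖ ^ (2 + 1) * (1 - ‖x‖)⁻¹ / ((2 : ℕ) + 1) := htaylor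
    _ ≤ ‖x‖ ^ (2 + 1) * 2 / ((2 : ℕ) + 1) := by gcongr
    _ = 2 / 3 * ‖x‖ ^ 3 := by push_cast; ring

lemma norm_stirlingDefect_le {z : ℂ} (hz : 0 < z.re) (hnorm : 2 ≤ ‖z‖) :
    ‖stirlingDefect z‖ ≤ 13 / 12 / ‖z‖ ^ 2 := by
  have hne : z ≠ 0 := fun h ↦ by simp [h] at hz
  have hinv : ‖z⁻¹‖ ≤ 1 / 2 := by
    rw [norm_inv, inv_le_comm₀ (by linarith) (by norm_num)]
    linarith
  have hadd : ‖z + 1 / 2‖ ≤ 5 / 4 * ‖z‖ := by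
    refine (norm_add_le _ _).trans ?_
    norm_num
    linarith
  have hsplit : (z + 1 / 2) * log (1 + z⁻¹) - 1 =
      (z + 1 / 2) * (log (1 + z⁻¹) - (z⁻¹ - z⁻¹ ^ 2 / 2)) - z⁻¹ ^ 2 / 4 := by
    field_simp
    ring
  rw [stirlingDefect_eq hz, hsplit]
  calc _ ≤ ‖z + 1 / 2‖ * ‖log (1 + z⁻¹) - (z⁻¹ - z⁻¹ ^ 2 / 2)‖ + ‖z⁻¹‖ ^ 2 / 4 := by
        refine (norm_sub_le _ _).trans_eq ?_
        rw [norm_mul, norm_div, norm_pow, norm_ofNat]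
    _ ≤ 5 / 4 * ‖z‖ * (2 / 3 * ‖z⁻¹‖ ^ 3) + ‖z⁻¹‖ ^ 2 / 4 := by
        gcongr
        exact norm_log_one_add_sub_le hinv
    _ = 13 / 12 / ‖z‖ ^ 2 := by
        rw [norm_inv]
        field_simp
        norm_num

lemma add_natCast_ne_zero {z : ℂ} (hz : 0 < z.re) (n : ℕ) : z + n ≠ 0 := fun h ↦ by
  have := congrArg re h
  rw [add_re, natCast_re, zero_re] at this
  linarith [n.cast_nonneg (α := ℝ)]

lemma norm_stirlingDefect_add_natCast_le {z : ℂ} (hre : 0 < z.re) (him : 2 ≤ z.im) (n : ℕ) :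
    ‖stirlingDefect (z + n)‖ ≤
      13 / 6 / (z.im + n - 1) - 13 / 6 / (z.im + (n + 1 : ℕ) - 1) := by
  have : (0 : ℝ) ≤ n := n.cast_nonneg
  have hsq : n ^ 2 + z.im ^ 2 ≤ ‖z + n‖ ^ 2 := by
    rw [Complex.sq_norm, normSq_apply, add_re, add_im, natCast_re, natCast_im, add_zero]
    nlinarith
  have hnorm : 2 ≤ ‖z + n‖ := le_of_sq_le_sq (by nlinarith) (norm_nonneg _)
  have hre' : 0 < (z + n).re := by
    rw [add_re, natCast_re]
    positivity
  calc ‖stirlingDefect (z + n)‖ ≤ 13 / 12 / ‖z + n‖ ^ 2 := norm_stirlingDefect_le hre' hnorm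
    _ ≤ 13 / 12 / (n ^ 2 + z.im ^ 2) := by gcongr
    _ ≤ 13 / 6 / (z.im + n - 1) - 13 / 6 / (z.im + (n + 1 : ℕ) - 1) := by
        push_cast
        rw [div_sub_div _ _ (by linarith) (by linarith), div_le_div_iff₀ (by positivity)
          (mul_pos (by linarith) (by linarith))]
        nlinarith [sq_nonneg (z.im - n)]

lemma norm_sum_stirlingDefect_le {z : ℂ} (hre : 0 < z.re) (him : 2 ≤ z.im) (n : ℕ) :
    ‖∑ k ∈ Finset.range n, stirlingDefect (z + k)‖ ≤ 13 / 6 / (z.im - 1) := by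
  calc _ ≤ ∑ k ∈ Finset.range n, ‖stirlingDefect (z + k)‖ := norm_sum_le _ _
    _ ≤ ∑ k ∈ Finset.range n,
        (13 / 6 / (z.im + k - 1) - 13 / 6 / (z.im + (k + 1 : ℕ) - 1)) :=
      Finset.sum_le_sum fun k _ ↦ norm_stirlingDefect_add_natCast_le hre him k
    _ = 13 / 6 / (z.im - 1) - 13 / 6 / (z.im + n - 1) := by
      rw [Finset.sum_range_sub', Nat.cast_zero, add_zero]
    _ ≤ 13 / 6 / (z.im - 1) := by
      have : 0 ≤ 13 / 6 / (z.im + n - 1) :=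
        div_nonneg (by norm_num) (by linarith [n.cast_nonneg (α := ℝ)])
      linarith

lemma prod_add_natCast_eq_exp {z : ℂ} (hz : 0 < z.re) (n : ℕ) :
    ∏ k ∈ Finset.range n, (z + k) = exp (stirlingLog (z + n) - stirlingLog z -
      ∑ k ∈ Finset.range n, stirlingDefect (z + k)) := by
  induction n with
  | zero => simp
  | succ n ih =>
    rw [Finset.prod_range_succ, ih, ← exp_log (add_natCast_ne_zero hz n), ← exp_add,
      Finset.sum_range_succ, stirlingDefect, exp_log (add_natCast_ne_zero hz n)]
    push_cast
    ring_nf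

lemma GammaSeq_eq_factorial_mul_exp {z : ℂ} (hz : 0 < z.re) {n : ℕ} (hn : n ≠ 0) :
    GammaSeq z n = n.factorial * exp (stirlingLog z + (z * log n - stirlingLog (z + (n + 1 : ℕ))) +
      ∑ k ∈ Finset.range (n + 1), stirlingDefect (z + k)) := by
  rw [GammaSeq, prod_add_natCast_eq_exp hz, cpow_def_of_ne_zero (Nat.cast_ne_zero.2 hn),
    div_eq_mul_inv, ← exp_neg, mul_comm (exp (log n * z)), mul_assoc, ← exp_add]
  ring_nf

lemma tendsto_natCast_mul_log_one_add_div (w : ℂ) :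
    Tendsto (fun n : ℕ ↦ (n : ℂ) * log (1 + w / n)) atTop (𝓝 w) := by
  refine tendsto_nat_mul_log_one_add_of_tendsto (tendsto_const_nhds.congr' ?_)
  filter_upwards [eventually_ne_atTop 0] with n hn
  rw [mul_div_cancel₀ _ (Nat.cast_ne_zero.2 hn)]

lemma tendsto_log_one_add_div (w : ℂ) :
    Tendsto (fun n : ℕ ↦ log (1 + w / n)) atTop (𝓝 0) := by
  have hprod := (tendsto_inv_atTop_nhds_zero_nat (𝕜 := ℂ)).mul
    (tendsto_natCast_mul_log_one_add_div w)
  rw [zero_mul] at hprod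
  refine hprod.congr' ?_
  filter_upwards [eventually_ne_atTop 0] with n hn
  rw [inv_mul_cancel_left₀ (Nat.cast_ne_zero.2 hn)]

lemma log_add_natCast_succ {z : ℂ} (hz : 0 < z.re) {n : ℕ} (hn : n ≠ 0) :
    log (z + (n + 1 : ℕ)) = Real.log n + log (1 + (z + 1) / n) := by
  have hn' : (n : ℂ) ≠ 0 := Nat.cast_ne_zero.2 hn
  have hfactor : z + (n + 1 : ℕ) = (n : ℝ) * (1 + (z + 1) / n) := by
    push_cast
    field_simp
    ring
  have hne : 1 + (z + 1) / n ≠ 0 := fun h ↦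
    add_natCast_ne_zero hz (n + 1) (by rw [hfactor, h, mul_zero])
  rw [hfactor, log_ofReal_mul (by positivity) hne]

lemma tendsto_im_mul_log_sub_stirlingLog {z : ℂ} (hz : 0 < z.re) :
    Tendsto (fun n : ℕ ↦ (z * log n - stirlingLog (z + (n + 1 : ℕ))).im) atTop (𝓝 0) := by
  have hlimit : Tendsto (fun n : ℕ ↦ (z + 1 - (n * log (1 + (z + 1) / n) +
      (z + 1 / 2) * log (1 + (z + 1) / n))).im) atTop (𝓝 0) := by
    have := (continuous_im.tendsto _).comp ((tendsto_const_nhds (x := z + 1)).sub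
      ((tendsto_natCast_mul_log_one_add_div (z + 1)).add
        ((tendsto_log_one_add_div (z + 1)).const_mul (z + 1 / 2))))
    rwa [mul_zero, add_zero, sub_self, zero_im] at this
  refine hlimit.congr' ?_
  filter_upwards [eventually_ne_atTop 0] with n hn
  have hreal : z * log n - stirlingLog (z + (n + 1 : ℕ)) =
      z + 1 - (n * log (1 + (z + 1) / n) + (z + 1 / 2) * log (1 + (z + 1) / n)) +
        ((n - (n + 1 / 2) * Real.log n : ℝ) : ℂ) := by
    rw [stirlingLog, log_add_natCast_succ hz hn, ← natCast_log]
    push_cast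
    ring
  rw [hreal, add_im, ofReal_im, add_zero]

lemma re_exp_mul_Gamma_pos {b z : ℂ} (hre : 0 < z.re) (him : 17 / 2 ≤ z.im)
    (hphase : |(b + stirlingLog z).im| ≤ 1) : 0 < (exp b * Gamma z).re := by
  have hlim : Tendsto (fun n ↦ exp b * GammaSeq z n) atTop (𝓝 (exp b * Gamma z)) :=
    (GammaSeq_tendsto_Gamma z).const_mul _
  suffices 0.15 * ‖exp b * Gamma z‖ ≤ (exp b * Gamma z).re by
    have hne : exp b * Gamma z ≠ 0 := mul_ne_zero (exp_ne_zero b) (Gamma_ne_zero_of_re_pos hre)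
    linarith [norm_pos_iff.2 hne]
  refine le_of_tendsto_of_tendsto (hlim.norm.const_mul 0.15)
    ((continuous_re.tendsto _).comp hlim) ?_
  have hsmall : ∀ᶠ n : ℕ in atTop, |(z * log n - stirlingLog (z + (n + 1 : ℕ))).im| < 0.009 := by
    simpa using (tendsto_im_mul_log_sub_stirlingLog hre).eventually
      (Metric.ball_mem_nhds 0 (show (0 : ℝ) < 0.009 by norm_num))
  filter_upwards [hsmall, eventually_ne_atTop 0] with n hn hn₀
  set E := z * log n - stirlingLog (z + (n + 1 : ℕ)) with hE
  set D := ∑ k ∈ Finset.range (n + 1), stirlingDefect (z + k) with hD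
  have hdefect : |D.im| ≤ 13 / 45 := by
    refine (abs_im_le_norm D).trans ((norm_sum_stirlingDefect_le hre (by linarith) _).trans ?_)
    rw [div_le_iff₀ (by linarith)]
    linarith
  have hseq : exp b * GammaSeq z n = (n.factorial : ℝ) * exp (b + stirlingLog z + E + D) := by
    rw [GammaSeq_eq_factorial_mul_exp hre hn₀, ofReal_natCast, mul_left_comm, ← exp_add, hE, hD]
    ring_nf
  have htotal : |(b + stirlingLog z + E + D).im| ≤ 1.3 := by
    rw [add_im, add_im]
    linarith [abs_add_three (b + stirlingLog z).im E.im D.im]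
  have hcos : 0.15 ≤ Real.cos (b + stirlingLog z + E + D).im := by
    nlinarith [Real.one_sub_sq_div_two_le_cos (x := (b + stirlingLog z + E + D).im),
      sq_abs (b + stirlingLog z + E + D).im, abs_nonneg (b + stirlingLog z + E + D).im]
  rw [Function.comp_apply, hseq, re_ofReal_mul, exp_re, norm_mul, norm_real, norm_exp,
    Real.norm_of_nonneg (by positivity)]
  calc _ = n.factorial * (Real.exp (b + stirlingLog z + E + D).re * 0.15) := by ring
    _ ≤ _ := by gcongr

/-- An approximation to the argument of `Gammaℝ (1 / 2 + t * I)`, given by Stirling's formula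
without its term in `[-π / 8, 0]`. -/
noncomputable def gammaPhase (t : ℝ) : ℝ :=
  t / 2 * (Real.log (t ^ 2 / 4 + 1 / 16) / 2 - 1 - Real.log Real.pi)

lemma im_stirlingLog_sub_mul_log_pi {z : ℂ} (hz : z.re = 1 / 4) :
    (stirlingLog z - z * Real.log Real.pi).im = gammaPhase (2 * z.im) - arg z / 4 := by
  have hlog : Real.log ‖z‖ = Real.log ((2 * z.im) ^ 2 / 4 + 1 / 16) / 2 := by
    rw [norm_def, Real.log_sqrt (normSq_nonneg z), normSq_apply, hz]
    ring_nf
  rw [stirlingLog, gammaPhase, ← hlog, sub_im, sub_im, mul_im, sub_re, sub_im, im_mul_ofReal,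
    log_re, log_im, hz]
  norm_num
  ring

lemma Gammaℝ_two_mul (z : ℂ) :
    Gammaℝ (2 * z) = exp (-(z * Real.log Real.pi)) * Gamma z := by
  rw [Gammaℝ_def, cpow_def_of_ne_zero (ofReal_ne_zero.2 Real.pi_ne_zero),
    ← ofReal_log Real.pi_pos.le]
  ring_nf

-- The two bounds leave room for the term `-arg z / 4 ∈ [-π / 8, 0]` missing from `gammaPhase`.
lemma neg_one_pow_mul_re_Gammaℝ_pos {t : ℝ} (ht : 17 ≤ t) (m : ℕ)
    (hlower : m * Real.pi - 1 + Real.pi / 8 ≤ gammaPhase t)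
    (hupper : gammaPhase t ≤ m * Real.pi + 1) :
    0 < (-1) ^ m * (Gammaℝ (1 / 2 + t * I)).re := by
  let z : ℂ := 1 / 4 + (t / 2 : ℝ) * I
  have hre : z.re = 1 / 4 := by simp [z]
  have him : z.im = t / 2 := by simp [z]
  have hs : 1 / 2 + t * I = 2 * z := by
    simp only [z]
    push_cast
    ring
  have harg_nonneg : 0 ≤ arg z := arg_nonneg_iff.2 (by linarith)
  have harg_le : arg z ≤ Real.pi / 2 :=
    (abs_le.1 (abs_arg_le_pi_div_two_iff.2 (by linarith))).2
  have hphase := im_stirlingLog_sub_mul_log_pi hre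
  rw [him, mul_div_cancel₀ t two_ne_zero] at hphase
  have htotal : |(-(z * Real.log Real.pi) - m * (Real.pi * I) + stirlingLog z).im| ≤ 1 := by
    have him_eq : (-(z * Real.log Real.pi) - m * (Real.pi * I) + stirlingLog z).im =
        gammaPhase t - arg z / 4 - m * Real.pi := by
      rw [← hphase]
      simp
      ring
    rw [him_eq]
    exact abs_le.2 ⟨by linarith, by linarith⟩
  have hpos := re_exp_mul_Gamma_pos (by linarith) (by linarith) htotal
  rwa [exp_sub, exp_nat_mul, exp_pi_mul_I, div_eq_mul_inv, ← inv_pow, inv_neg_one, mul_right_comm,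
    ← Gammaℝ_two_mul, ← hs, mul_comm, ← ofReal_one, ← ofReal_neg, ← ofReal_pow,
    re_ofReal_mul] at hpos

lemma log_pi_mem_Icc : Real.log Real.pi ∈ Set.Icc 1.143 1.146 := by
  have hsplit : Real.log (Real.pi / 3) = Real.log Real.pi - Real.log 3 :=
    Real.log_div Real.pi_ne_zero three_ne_zero
  have hupper := Real.log_le_sub_one_of_pos (show 0 < Real.pi / 3 by positivity)
  have hlower := Real.one_sub_inv_le_log_of_pos (show 0 < Real.pi / 3 by positivity)
  have hinv : (Real.pi / 3)⁻¹ ≤ 0.9552 := by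
    rw [inv_le_comm₀ (by positivity) (by norm_num)]
    linarith [Real.pi_gt_d6]
  constructor <;>
    linarith [Real.pi_lt_d6, Real.log_three_gt_d9, Real.log_three_lt_d9]

lemma log_mem_Icc_of_le {a x : ℝ} (ha : 0 < a) (hx : a ≤ x) :
    Real.log x ∈ Set.Icc (Real.log a) (Real.log a + (x / a - 1)) := by
  refine ⟨Real.log_le_log ha hx, ?_⟩
  have := Real.log_le_sub_one_of_pos (div_pos (ha.trans_le hx) ha)
  rw [Real.log_div (ha.trans_le hx).ne' ha.ne'] at this
  linarith

lemma re_Gammaℝ_one_half_add_17_mul_I_pos : 0 < (Gammaℝ (1 / 2 + (17 : ℝ) * I)).re := by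
  have hlog : Real.log 72 = 3 * Real.log 2 + 2 * Real.log 3 := by
    rw [show (72 : ℝ) = 2 ^ 3 * 3 ^ 2 by norm_num, Real.log_mul (by norm_num) (by norm_num),
      Real.log_pow, Real.log_pow, Nat.cast_ofNat, Nat.cast_ofNat]
  have hnear := log_mem_Icc_of_le (a := 72) (x := 17 ^ 2 / 4 + 1 / 16) (by norm_num) (by norm_num)
  have hlower : -1 + Real.pi / 8 ≤ gammaPhase 17 := by
    rw [gammaPhase]
    linarith [hnear.1, log_pi_mem_Icc.2, Real.log_two_gt_d9, Real.log_three_gt_d9, Real.pi_lt_d6]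
  have hupper : gammaPhase 17 ≤ 1 := by
    rw [gammaPhase]
    linarith [hnear.2, log_pi_mem_Icc.1, Real.log_two_lt_d9, Real.log_three_lt_d9]
  simpa using neg_one_pow_mul_re_Gammaℝ_pos le_rfl 0 (by simpa using hlower) (by simpa using hupper)

lemma re_Gammaℝ_one_half_add_22_mul_I_neg : (Gammaℝ (1 / 2 + (22 : ℝ) * I)).re < 0 := by
  have hlog : Real.log 120 = 3 * Real.log 2 + Real.log 3 + Real.log 5 := by
    rw [show (120 : ℝ) = 2 ^ 3 * 3 * 5 by norm_num, Real.log_mul (by norm_num) (by norm_num),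
      Real.log_mul (by norm_num) (by norm_num), Real.log_pow, Nat.cast_ofNat]
  have hnear := log_mem_Icc_of_le (a := 120) (x := 22 ^ 2 / 4 + 1 / 16) (by norm_num) (by norm_num)
  have hlower : Real.pi - 1 + Real.pi / 8 ≤ gammaPhase 22 := by
    rw [gammaPhase]
    linarith [hnear.1, log_pi_mem_Icc.2, Real.log_two_gt_d9, Real.log_three_gt_d9,
      Real.log_five_gt_d9, Real.pi_lt_d6]
  have hupper : gammaPhase 22 ≤ Real.pi + 1 := by
    rw [gammaPhase]
    linarith [hnear.2, log_pi_mem_Icc.1, Real.log_two_lt_d9, Real.log_three_lt_d9,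
      Real.log_five_lt_d9, Real.pi_gt_d6]
  simpa using neg_one_pow_mul_re_Gammaℝ_pos (t := 22) (by norm_num) 1 (by simpa using hlower)
    (by simpa using hupper)

lemma re_Gammaℝ_one_half_add_27_mul_I_pos : 0 < (Gammaℝ (1 / 2 + (27 : ℝ) * I)).re := by
  have hlog : Real.log 180 = 2 * Real.log 2 + 2 * Real.log 3 + Real.log 5 := by
    rw [show (180 : ℝ) = 2 ^ 2 * 3 ^ 2 * 5 by norm_num, Real.log_mul (by norm_num) (by norm_num),
      Real.log_mul (by norm_num) (by norm_num), Real.log_pow, Real.log_pow, Nat.cast_ofNat]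
  have hnear := log_mem_Icc_of_le (a := 180) (x := 27 ^ 2 / 4 + 1 / 16) (by norm_num) (by norm_num)
  have hlower : 2 * Real.pi - 1 + Real.pi / 8 ≤ gammaPhase 27 := by
    rw [gammaPhase]
    linarith [hnear.1, log_pi_mem_Icc.2, Real.log_two_gt_d9, Real.log_three_gt_d9,
      Real.log_five_gt_d9, Real.pi_lt_d6]
  have hupper : gammaPhase 27 ≤ 2 * Real.pi + 1 := by
    rw [gammaPhase]
    linarith [hnear.2, log_pi_mem_Icc.1, Real.log_two_lt_d9, Real.log_three_lt_d9,
      Real.log_five_lt_d9, Real.pi_gt_d6]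
  simpa using neg_one_pow_mul_re_Gammaℝ_pos (t := 27) (by norm_num) 2 (by simpa using hlower)
    (by simpa using hupper)

end StirlingPhase

section ThreeZeros

open ComplexConjugate

lemma im_riemannXi_one_half_add_mul_I (t : ℝ) : (riemannXi (1 / 2 + t * I)).im = 0 := by
  have hreflect : conj (1 / 2 + t * I) = 1 - (1 / 2 + t * I) := by
    apply Complex.ext <;> norm_num
  rw [← conj_eq_iff_im, ← riemannXi_conj, hreflect, riemannXi_one_sub]

lemma re_riemannXi_mul_re_riemannZeta (t : ℝ) :
    (riemannXi (1 / 2 + t * I)).re * (riemannZeta (1 / 2 + t * I)).re =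
      -((1 / 4 + t ^ 2) * normSq (riemannZeta (1 / 2 + t * I)) * (Gammaℝ (1 / 2 + t * I)).re) := by
  have him := im_riemannXi_one_half_add_mul_I t
  set s : ℂ := 1 / 2 + t * I with hs
  have hre : s.re = 1 / 2 := by simp [hs]
  have hs_ne_one : s ≠ 1 := fun h ↦ by norm_num [h] at hre
  have hfactor : s * (s - 1) = (-(1 / 4 + t ^ 2) : ℝ) := by
    rw [hs]
    push_cast
    linear_combination (t : ℂ) ^ 2 * I_sq
  have hconj : riemannXi s * conj (riemannZeta s) =
      (-((1 / 4 + t ^ 2) * normSq (riemannZeta s)) : ℝ) * Gammaℝ s := by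
    rw [riemannXi_eq_mul_riemannZeta (by linarith) hs_ne_one, hfactor, mul_assoc, mul_conj]
    push_cast
    ring
  calc (riemannXi s).re * (riemannZeta s).re = (riemannXi s * conj (riemannZeta s)).re := by
        rw [mul_re, him, conj_re, zero_mul, sub_zero]
    _ = _ := by rw [hconj, re_ofReal_mul, neg_mul]

section CriticalLineSign

variable {t : ℝ}

lemma one_fourth_add_sq_mul_normSq_riemannZeta_pos
    (hzeta : 0 < (riemannZeta (1 / 2 + t * I)).re) :
    0 < (1 / 4 + t ^ 2) * normSq (riemannZeta (1 / 2 + t * I)) :=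
  mul_pos (by positivity) (normSq_pos.2 fun h ↦ by rw [h, zero_re] at hzeta; exact hzeta.false)

lemma re_riemannXi_neg_of_re_Gammaℝ_pos (hzeta : 0 < (riemannZeta (1 / 2 + t * I)).re)
    (hGamma : 0 < (Gammaℝ (1 / 2 + t * I)).re) :
    (riemannXi (1 / 2 + t * I)).re < 0 := by
  refine neg_of_mul_neg_left (b := (riemannZeta (1 / 2 + t * I)).re) ?_ hzeta.le
  rw [re_riemannXi_mul_re_riemannZeta]
  exact neg_neg_of_pos (mul_pos (one_fourth_add_sq_mul_normSq_riemannZeta_pos hzeta) hGamma)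

lemma re_riemannXi_pos_of_re_Gammaℝ_neg (hzeta : 0 < (riemannZeta (1 / 2 + t * I)).re)
    (hGamma : (Gammaℝ (1 / 2 + t * I)).re < 0) :
    0 < (riemannXi (1 / 2 + t * I)).re := by
  refine pos_of_mul_pos_left (b := (riemannZeta (1 / 2 + t * I)).re) ?_ hzeta.le
  rw [re_riemannXi_mul_re_riemannZeta]
  exact neg_pos_of_neg
    (mul_neg_of_pos_of_neg (one_fourth_add_sq_mul_normSq_riemannZeta_pos hzeta) hGamma)

end CriticalLineSign

/-- The set of imaginary parts of the zeros of `riemannXi`. -/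
def xiOrdinates : Set ℝ := im '' {ρ | riemannXi ρ = 0}

lemma neg_mem_xiOrdinates {y : ℝ} (hy : y ∈ xiOrdinates) : -y ∈ xiOrdinates := by
  obtain ⟨ρ, hρ, rfl⟩ := hy
  exact ⟨conj ρ, by rw [Set.mem_ofPred_eq, riemannXi_conj, hρ, map_zero], conj_im ρ⟩

lemma exists_mem_xiOrdinates_abs_sub_lt {T : ℝ} (hT : 29.33 ≤ T) :
    ∃ y ∈ xiOrdinates, |y - T| < 22 / 3 := by
  obtain ⟨ρ, hρ, him⟩ := exists_riemannXi_eq_zero_abs_im_sub_lt hT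
  exact ⟨ρ.im, ⟨ρ, hρ, rfl⟩, him⟩

lemma exists_mem_xiOrdinates_Ioo_of_re_mul_re_neg {a b : ℝ} (hab : a ≤ b)
    (h : (riemannXi (1 / 2 + a * I)).re * (riemannXi (1 / 2 + b * I)).re < 0) :
    ∃ y ∈ xiOrdinates, y ∈ Set.Ioo a b := by
  have hcont : Continuous fun t : ℝ ↦ (riemannXi (1 / 2 + t * I)).re :=
    continuous_re.comp (differentiable_riemannXi.continuous.comp (by fun_prop))
  obtain ⟨y, hy, hre⟩ : ∃ y ∈ Set.Ioo a b, (riemannXi (1 / 2 + y * I)).re = 0 := by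
    rcases mul_neg_iff.1 h with ⟨ha, hb⟩ | ⟨ha, hb⟩
    · exact intermediate_value_Ioo' hab hcont.continuousOn ⟨hb, ha⟩
    · exact intermediate_value_Ioo hab hcont.continuousOn ⟨ha, hb⟩
  exact ⟨y, ⟨1 / 2 + y * I, Complex.ext hre (im_riemannXi_one_half_add_mul_I y), by simp⟩, hy⟩

lemma exists_three_xiOrdinates_lt_27 : ∃ y₁ ∈ xiOrdinates, ∃ y₂ ∈ xiOrdinates, ∃ y₃ ∈ xiOrdinates,
    y₁ ∈ Set.Ioo 0 17 ∧ y₂ ∈ Set.Ioo 17 22 ∧ y₃ ∈ Set.Ioo 22 27 := by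
  have hpos_zero : 0 < (riemannXi (1 / 2 + (0 : ℝ) * I)).re := by
    simpa using re_riemannXi_one_half_pos
  have hneg_17 := re_riemannXi_neg_of_re_Gammaℝ_pos re_riemannZeta_one_half_add_17_mul_I_pos
    re_Gammaℝ_one_half_add_17_mul_I_pos
  have hpos_22 := re_riemannXi_pos_of_re_Gammaℝ_neg re_riemannZeta_one_half_add_22_mul_I_pos
    re_Gammaℝ_one_half_add_22_mul_I_neg
  have hneg_27 := re_riemannXi_neg_of_re_Gammaℝ_pos re_riemannZeta_one_half_add_27_mul_I_pos
    re_Gammaℝ_one_half_add_27_mul_I_pos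
  obtain ⟨y₁, hy₁, hIoo₁⟩ := exists_mem_xiOrdinates_Ioo_of_re_mul_re_neg (by norm_num)
    (mul_neg_of_pos_of_neg hpos_zero hneg_17)
  obtain ⟨y₂, hy₂, hIoo₂⟩ := exists_mem_xiOrdinates_Ioo_of_re_mul_re_neg (by norm_num)
    (mul_neg_of_neg_of_pos hneg_17 hpos_22)
  obtain ⟨y₃, hy₃, hIoo₃⟩ := exists_mem_xiOrdinates_Ioo_of_re_mul_re_neg (by norm_num)
    (mul_neg_of_pos_of_neg hpos_22 hneg_27)
  exact ⟨y₁, hy₁, y₂, hy₂, y₃, hy₃, hIoo₁, hIoo₂, hIoo₃⟩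

lemma exists_three_xiOrdinates_of_le {t : ℝ} (ht : 44 ≤ t) :
    ∃ x ∈ xiOrdinates, ∃ y ∈ xiOrdinates, ∃ z ∈ xiOrdinates,
      t - 22 ≤ x ∧ x < y ∧ y < z ∧ z ≤ t + 22 := by
  obtain ⟨x, hx, hxt⟩ := exists_mem_xiOrdinates_abs_sub_lt (T := t - 44 / 3) (by linarith)
  obtain ⟨y, hy, hyt⟩ := exists_mem_xiOrdinates_abs_sub_lt (T := t) (by linarith)
  obtain ⟨z, hz, hzt⟩ := exists_mem_xiOrdinates_abs_sub_lt (T := t + 44 / 3) (by linarith)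
  rw [abs_lt] at hxt hyt hzt
  exact ⟨x, hx, y, hy, z, hz, by linarith, by linarith, by linarith, by linarith⟩

lemma exists_three_xiOrdinates_of_mem_Icc {t : ℝ} (ht : t ∈ Set.Icc 0 44) :
    ∃ x ∈ xiOrdinates, ∃ y ∈ xiOrdinates, ∃ z ∈ xiOrdinates,
      t - 22 ≤ x ∧ x < y ∧ y < z ∧ z ≤ t + 22 := by
  obtain ⟨ht_nonneg, ht_le⟩ := ht
  obtain ⟨y₁, hy₁, y₂, hy₂, y₃, hy₃, ⟨hlt₁, hgt₁⟩, ⟨hlt₂, hgt₂⟩, hlt₃, hgt₃⟩ :=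
    exists_three_xiOrdinates_lt_27
  obtain ⟨y₄, hy₄, hwindow₄⟩ := exists_mem_xiOrdinates_abs_sub_lt (T := 34.4) (by norm_num)
  obtain ⟨y₅, hy₅, hwindow₅⟩ := exists_mem_xiOrdinates_abs_sub_lt (T := 49.1) (by norm_num)
  rw [abs_lt] at hwindow₄ hwindow₅
  rcases le_total t 5 with h | h
  · exact ⟨-y₁, neg_mem_xiOrdinates hy₁, y₁, hy₁, y₂, hy₂,
      by linarith, by linarith, by linarith, by linarith⟩
  rcases le_total t 22 with h | h
  · exact ⟨y₁, hy₁, y₂, hy₂, y₃, hy₃, by linarith, by linarith, by linarith, by linarith⟩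
  rcases le_total t 39 with h | h
  · exact ⟨y₂, hy₂, y₃, hy₃, y₄, hy₄, by linarith, by linarith, by linarith, by linarith⟩
  · exact ⟨y₃, hy₃, y₄, hy₄, y₅, hy₅, by linarith, by linarith, by linarith, by linarith⟩

lemma exists_three_xiOrdinates (t : ℝ) :
    ∃ x ∈ xiOrdinates, ∃ y ∈ xiOrdinates, ∃ z ∈ xiOrdinates,
      t - 22 ≤ x ∧ x < y ∧ y < z ∧ z ≤ t + 22 := by
  wlog ht : 0 ≤ t generalizing t
  · obtain ⟨x, hx, y, hy, z, hz, hlower, hxy, hyz, hupper⟩ := this (-t) (by linarith)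
    exact ⟨-z, neg_mem_xiOrdinates hz, -y, neg_mem_xiOrdinates hy, -x, neg_mem_xiOrdinates hx,
      by linarith, by linarith, by linarith, by linarith⟩
  rcases le_total t 44 with h | h
  · exact exists_three_xiOrdinates_of_mem_Icc ⟨ht, h⟩
  · exact exists_three_xiOrdinates_of_le h

lemma exists_completedRiemannZeta_eq_zero_of_mem_xiOrdinates {y : ℝ} (hy : y ∈ xiOrdinates) :
    ∃ ρ : ℂ, ρ.im = y ∧ completedRiemannZeta ρ = 0 ∧ 0 < ρ.re ∧ ρ.re ≤ 1 / 2 := by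
  obtain ⟨ρ, hρ, rfl⟩ := hy
  rcases le_total ρ.re (1 / 2) with hre | hre
  · exact ⟨ρ, rfl, completedRiemannZeta_eq_zero_of_riemannXi_eq_zero hρ,
      re_pos_of_riemannXi_eq_zero hρ, hre⟩
  · have hreflect : riemannXi (1 - conj ρ) = 0 := by
      rw [riemannXi_one_sub, riemannXi_conj, hρ, map_zero]
    refine ⟨1 - conj ρ, by simp, completedRiemannZeta_eq_zero_of_riemannXi_eq_zero hreflect,
      re_pos_of_riemannXi_eq_zero hreflect, ?_⟩
    rw [sub_re, conj_re, one_re]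
    linarith

end ThreeZeros

theorem three_zeta_zeros_near (t : ℝ) :
    ∃ ρ₁ ρ₂ ρ₃ : ℂ, ρ₁ ≠ ρ₂ ∧ ρ₁ ≠ ρ₃ ∧ ρ₂ ≠ ρ₃ ∧
      ∀ ρ ∈ ({ρ₁, ρ₂, ρ₃} : Set ℂ),
        completedRiemannZeta ρ = 0 ∧ 0 < ρ.re ∧ ρ.re ≤ 1 / 2 ∧ |t - ρ.im| ≤ 22 := by
  obtain ⟨x, hx, y, hy, z, hz, hlower, hxy, hyz, hupper⟩ := exists_three_xiOrdinates t
  obtain ⟨ρ₁, rfl, hzero₁, hpos₁, hhalf₁⟩ :=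
    exists_completedRiemannZeta_eq_zero_of_mem_xiOrdinates hx
  obtain ⟨ρ₂, rfl, hzero₂, hpos₂, hhalf₂⟩ :=
    exists_completedRiemannZeta_eq_zero_of_mem_xiOrdinates hy
  obtain ⟨ρ₃, rfl, hzero₃, hpos₃, hhalf₃⟩ :=
    exists_completedRiemannZeta_eq_zero_of_mem_xiOrdinates hz
  have ne_of_im_lt {a b : ℂ} (h : a.im < b.im) : a ≠ b := fun hab ↦ h.ne (congrArg im hab)
  refine ⟨ρ₁, ρ₂, ρ₃, ne_of_im_lt hxy, ne_of_im_lt (hxy.trans hyz), ne_of_im_lt hyz, ?_⟩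
  rintro ρ (rfl | rfl | rfl)
  · exact ⟨hzero₁, hpos₁, hhalf₁, abs_le.2 ⟨by linarith, by linarith⟩⟩
  · exact ⟨hzero₂, hpos₂, hhalf₂, abs_le.2 ⟨by linarith, by linarith⟩⟩
  · exact ⟨hzero₃, hpos₃, hhalf₃, abs_le.2 ⟨by linarith, by linarith⟩⟩
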